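/- Let p be a prime and n ≥ 1. Let M be an analytic submanifold of ℚ_p^n, let v ≥ n, and suppose w_p(y₀) ≤ v for some y₀ ∈ M. Then for almost every point y in a neighbourhood of y₀ in M (with respect to the smooth measure class on M) one has w_p(y) ≤ v. -/

import Mathlib

open MeasureTheory Metric
open scoped ENNReal NNReal

namespace PadicDioph

variable (p : ℕ) [Fact p.Prime]

noncomputable instance : MeasurableSpace ℚ_[p] := borel _
instance : BorelSpace ℚ_[p] := ⟨rfl⟩

/-- Membership in `ℤ[1/p]`, viewed inside `ℚ`. -/
def IsZInvP (q : ℚ) : Prop := ∃ (z : ℤ) (k : ℕ), q = (z : ℚ) / (p : ℚ) ^ k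

/-- Sup norm (max of archimedean absolute values) of a finite tuple of rationals. -/
noncomputable def supNormR {m : ℕ} (q : Fin m → ℚ) : ℝ := ⨆ i, |(q i : ℝ)|

/-- Sup of the `p`-adic absolute values of a finite tuple of rationals. -/
noncomputable def supNormP {m : ℕ} (q : Fin m → ℚ) : ℝ := ⨆ i, ‖((q i : ℚ_[p]))‖

/-- Sup norm of an integer tuple together with an extra integer coordinate. -/
noncomputable def supNormZ {n : ℕ} (q0 : ℤ) (q : Fin n → ℤ) : ℝ :=
  max |(q0 : ℝ)| (⨆ i, |((q i : ℤ) : ℝ)|)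

/-- The classical Diophantine exponent `w(y)` of `y ∈ ℚ_p^n`: the supremum of all `v > 0`
such that `|q₀ + q·y|_p ≤ ‖(q₀,q)‖_∞^{-v}` has infinitely many integer solutions. -/
noncomputable def wExp {n : ℕ} (y : Fin n → ℚ_[p]) : ℝ≥0∞ :=
  ⨆ (v : ℝ) (_ : 0 < v ∧
    {qq : ℤ × (Fin n → ℤ) |
      ‖((qq.1 : ℚ_[p]) + ∑ i, (qq.2 i : ℚ_[p]) * y i)‖ ≤
        (supNormZ qq.1 qq.2) ^ (-v)}.Infinite), ENNReal.ofReal v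

/-- `y` is very well approximable if `w(y) > n + 1`. -/
def IsVWA {n : ℕ} (y : Fin n → ℚ_[p]) : Prop :=
  ENNReal.ofReal ((n : ℝ) + 1) < wExp p y

/-- The defining condition of the exponent `w_p`: there are solutions
`q̃ = (q₀, q) ∈ ℤ[1/p]^{n+1}` of `|q·y + q₀|_p < (‖q‖_p ‖q̃‖_∞)^{-v} ‖q̃‖_∞^{-1}`
with `‖q‖_p ‖q̃‖_∞` arbitrarily large. -/
def WpCond {n : ℕ} (y : Fin n → ℚ_[p]) (v : ℝ) : Prop :=
  ∀ T : ℝ, ∃ (q0 : ℚ) (q : Fin n → ℚ),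
    IsZInvP p q0 ∧ (∀ i, IsZInvP p (q i)) ∧
    T < supNormP p q * supNormR (Fin.cons q0 q) ∧
    ‖(∑ i, (q i : ℚ_[p]) * y i) + (q0 : ℚ_[p])‖ <
      (supNormP p q * supNormR (Fin.cons q0 q)) ^ (-v) * (supNormR (Fin.cons q0 q))⁻¹

/-- The exponent `w_p(y)`. -/
noncomputable def wpExp {n : ℕ} (y : Fin n → ℚ_[p]) : ℝ≥0∞ :=
  ⨆ (v : ℝ) (_ : 0 < v ∧ WpCond p y v), ENNReal.ofReal v

/-- `Π_+` of a tuple of rationals: the product of `|q_i|_∞` over the nonzero coordinates. -/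
noncomputable def piPlusQ {m : ℕ} (q : Fin m → ℚ) : ℝ :=
  ∏ i, (if q i = 0 then 1 else |(q i : ℝ)|)

/-- `Π_+` of `(q₀, q)` with integer coordinates. -/
noncomputable def piPlusZ {n : ℕ} (q0 : ℤ) (q : Fin n → ℤ) : ℝ :=
  (if q0 = 0 then 1 else |(q0 : ℝ)|) * ∏ i, (if q i = 0 then 1 else |((q i : ℤ) : ℝ)|)

/-- `y ∈ ℚ_p^n` is very well multiplicatively approximable. -/
def IsVWMA {n : ℕ} (y : Fin n → ℚ_[p]) : Prop :=
  ∃ ε : ℝ, 0 < ε ∧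
    {qq : ℤ × (Fin n → ℤ) |
      ‖((qq.1 : ℚ_[p]) + ∑ i, (qq.2 i : ℚ_[p]) * y i)‖ ≤
        (piPlusZ qq.1 qq.2) ^ (-(1 + ε))}.Infinite

/-- A measure on `ℚ_p^n` is strongly extremal if almost every point is not VWMA. -/
def StronglyExtremal {n : ℕ} (μ : Measure (Fin n → ℚ_[p])) : Prop :=
  ∀ᵐ y ∂μ, ¬ IsVWMA p y

/-- `δ(g_t u_y D^{n+1})` for the one-parameter flow: `g_t` has `p`-adic component
`diag(p^{-t},1,…,1)` and archimedean component `p^{-t/(n+1)}·Id`. -/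
noncomputable def deltaOne {n : ℕ} (y : Fin n → ℚ_[p]) (t : ℕ) : ℝ :=
  sInf { c : ℝ | ∃ qt : Fin (n + 1) → ℚ, (∀ i, IsZInvP p (qt i)) ∧ qt ≠ 0 ∧
    c = ((p : ℝ) ^ (-(t : ℝ) / ((n : ℝ) + 1)) * supNormR qt) *
        max (‖(((p : ℚ_[p]) ^ t)⁻¹ * ((qt 0 : ℚ_[p]) + ∑ i : Fin n, (qt i.succ : ℚ_[p]) * y i))‖)
            (⨆ i : Fin n, ‖((qt i.succ : ℚ_[p]))‖) }

/-- The exponent `γ(y)`. -/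
noncomputable def gammaExp {n : ℕ} (y : Fin n → ℚ_[p]) : ℝ :=
  sSup {c : ℝ | 0 ≤ c ∧ ∀ N : ℕ, ∃ t : ℕ, N ≤ t ∧
    deltaOne p y t ≤ (p : ℝ) ^ (-(c * (t : ℝ)))}

/-- `δ(g_t u_y D^{n+1})` for the multiparameter flow: for `t = (t₀,…,t_n)` with
`T = Σ tᵢ`, the `p`-adic component of `g_t` is `diag(p^{-T},1,…,1)` and the archimedean
component is `diag(p^{-t₀},…,p^{-t_n})`. -/
noncomputable def deltaMulti {n : ℕ} (y : Fin n → ℚ_[p]) (t : Fin (n + 1) → ℕ) : ℝ :=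
  sInf { c : ℝ | ∃ qt : Fin (n + 1) → ℚ, (∀ i, IsZInvP p (qt i)) ∧ qt ≠ 0 ∧
    c = (⨆ i, (p : ℝ) ^ (-((t i : ℝ))) * |(qt i : ℝ)|) *
        max (‖(((p : ℚ_[p]) ^ (∑ i, t i))⁻¹ *
              ((qt 0 : ℚ_[p]) + ∑ i : Fin n, (qt i.succ : ℚ_[p]) * y i))‖)
            (⨆ i : Fin n, ‖((qt i.succ : ℚ_[p]))‖) }

/-- The support of a measure on a metric space. -/
def measSupp {X : Type*} [MetricSpace X] [MeasurableSpace X] (μ : Measure X) : Set X :=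
  {x | ∀ r : ℝ, 0 < r → 0 < μ (ball x r)}

/-- `‖f‖_{μ,B}`. -/
noncomputable def muSupNorm {X : Type*} [MetricSpace X] [MeasurableSpace X]
    (μ : Measure X) (B : Set X) (f : X → ℚ_[p]) : ℝ :=
  sSup {c : ℝ | 0 < μ {x ∈ B | c < ‖f x‖}}

/-- `f` is `(C, α)`-good on `V` with respect to `μ`. -/
def IsGoodOn {X : Type*} [MetricSpace X] [MeasurableSpace X] (μ : Measure X)
    (C a : ℝ) (V : Set X) (f : X → ℚ_[p]) : Prop :=
  ∀ (x₀ : X) (r : ℝ), 0 < r → x₀ ∈ measSupp μ → ball x₀ r ⊆ V →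
    ∀ ε : ℝ, 0 < ε →
      μ {x ∈ ball x₀ r | ‖f x‖ < ε} ≤
        ENNReal.ofReal (C * (ε / muSupNorm p μ (ball x₀ r) f) ^ a) * μ (ball x₀ r)

/-- A metric space is Besicovitch: any family of balls whose centers exhaust a bounded
set `A` admits a countable subfamily covering `A` with multiplicity at most `N`. -/
def IsBesicovitch (X : Type*) [MetricSpace X] : Prop :=
  ∃ N : ℕ, ∀ (A : Set X), Bornology.IsBounded A →
    ∀ F : Set (X × ℝ), (∀ b ∈ F, 0 < b.2) → (∀ x ∈ A, ∃ r : ℝ, (x, r) ∈ F) →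
      ∃ S ⊆ F, S.Countable ∧ (∀ x ∈ A, ∃ b ∈ S, x ∈ ball b.1 b.2) ∧
        ∀ x : X, {b ∈ S | x ∈ ball b.1 b.2}.encard ≤ N

/-- `μ` is `D`-Federer on the open set `U`. -/
def IsDFedererOn {X : Type*} [MetricSpace X] [MeasurableSpace X]
    (μ : Measure X) (D : ℝ) (U : Set X) : Prop :=
  ∀ x ∈ measSupp μ, ∀ r : ℝ, 0 < r → ball x (3 * r) ⊆ U →
    μ (ball x (3 * r)) ≤ ENNReal.ofReal D * μ (ball x r)

/-- `μ` is Federer. -/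
def IsFederer {X : Type*} [MetricSpace X] [MeasurableSpace X] (μ : Measure X) : Prop :=
  ∀ᵐ x ∂μ, ∃ U : Set X, IsOpen U ∧ x ∈ U ∧ 0 < μ U ∧ ∃ D : ℝ, 0 < D ∧ IsDFedererOn μ D U

/-- The pair `(f, μ)` is good: `μ`-a.e. point has a neighbourhood `V` and `C, α > 0`
such that every affine combination `c₀ + Σ cᵢ fᵢ` is `(C, α)`-good on `V` w.r.t. `μ`. -/
def GoodPair {X : Type*} [MetricSpace X] [MeasurableSpace X] {n : ℕ}
    (f : X → (Fin n → ℚ_[p])) (μ : Measure X) : Prop :=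
  ∀ᵐ x ∂μ, ∃ V : Set X, IsOpen V ∧ x ∈ V ∧ ∃ C a : ℝ, 0 < C ∧ 0 < a ∧
    ∀ c0 : ℚ_[p], ∀ c : Fin n → ℚ_[p],
      IsGoodOn p μ C a V (fun x => c0 + ∑ i, c i * f x i)

/-- `(f, μ)` is nonplanar in the affine subspace `L`. -/
def NonplanarIn {X : Type*} [MetricSpace X] [MeasurableSpace X] {n : ℕ}
    (f : X → (Fin n → ℚ_[p])) (μ : Measure X)
    (L : AffineSubspace ℚ_[p] (Fin n → ℚ_[p])) : Prop :=
  ∀ B : Set X, IsOpen B → B.Nonempty → 0 < μ B →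
    affineSpan ℚ_[p] (f '' (B ∩ measSupp μ)) = L

/-- `f` is nondegenerate in the affine subspace `L` at `x`: `f` takes values in `L` and the
span of the partial derivatives of `f` at `x` up to some order is the linear part of `L`. -/
def NondegenerateAt {d n : ℕ} (f : (Fin d → ℚ_[p]) → (Fin n → ℚ_[p]))
    (L : AffineSubspace ℚ_[p] (Fin n → ℚ_[p])) (x : Fin d → ℚ_[p]) : Prop :=
  (∀ u, f u ∈ L) ∧ ∃ m : ℕ,
    Submodule.span ℚ_[p]
      {v : Fin n → ℚ_[p] | ∃ j : ℕ, j ≤ m ∧ 1 ≤ j ∧ ∃ vs : Fin j → (Fin d → ℚ_[p]),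
        v = iteratedFDeriv ℚ_[p] j f x vs} = L.direction

/-- An analytic chart of the `d`-dimensional submanifold `M` of `ℚ_p^n`: an analytic map
`f` on an open set `U`, injective on `U`, immersive, a homeomorphism onto its image, whose
image is a relatively open subset of `M`. -/
def IsChart (d n : ℕ) (M : Set (Fin n → ℚ_[p]))
    (U : Set (Fin d → ℚ_[p])) (f : (Fin d → ℚ_[p]) → (Fin n → ℚ_[p])) : Prop :=
  IsOpen U ∧ AnalyticOnNhd ℚ_[p] f U ∧ Set.InjOn f U ∧
  (∀ x ∈ U, Function.Injective (fderiv ℚ_[p] f x)) ∧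
  (∀ x ∈ U, ∀ V : Set (Fin d → ℚ_[p]), IsOpen V → x ∈ V →
      ∃ W : Set (Fin n → ℚ_[p]), IsOpen W ∧ f x ∈ W ∧ W ∩ f '' U ⊆ f '' (V ∩ U)) ∧
  ∃ W : Set (Fin n → ℚ_[p]), IsOpen W ∧ M ∩ W = f '' U

/-- `M` is a `d`-dimensional analytic submanifold of `ℚ_p^n`. -/
def IsAnalyticSubmanifold (d n : ℕ) (M : Set (Fin n → ℚ_[p])) : Prop :=
  M.Nonempty ∧ ∀ y ∈ M, ∃ (U : Set (Fin d → ℚ_[p])) (f : (Fin d → ℚ_[p]) → (Fin n → ℚ_[p])),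
    IsChart p d n M U f ∧ y ∈ f '' U

end PadicDioph

namespace PadicDioph
section Geo
open Matrix

def wedge {j m : ℕ} (B : Matrix (Fin j) (Fin m) ℤ) : ℕ :=
  Finset.univ.sup fun e : Fin j → Fin m => (B.submatrix id e).det.natAbs

lemma le_wedge {j m : ℕ} (B : Matrix (Fin j) (Fin m) ℤ) (e : Fin j → Fin m) :
    (B.submatrix id e).det.natAbs ≤ wedge B :=
  Finset.le_sup (f := fun e : Fin j → Fin m => (B.submatrix id e).det.natAbs) (Finset.mem_univ e)

lemma exists_wedge {j m : ℕ} (B : Matrix (Fin j) (Fin m) ℤ) (h : wedge B ≠ 0) :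
    ∃ e : Fin j → Fin m, (B.submatrix id e).det.natAbs = wedge B := by
  have hne : (Finset.univ : Finset (Fin j → Fin m)).Nonempty := by
    by_contra h0
    rw [Finset.not_nonempty_iff_eq_empty] at h0
    exact h (by simp [wedge, h0])
  obtain ⟨e, _, he⟩ := Finset.exists_mem_eq_sup Finset.univ hne
    (fun e : Fin j → Fin m => (B.submatrix id e).det.natAbs)
  exact ⟨e, he.symm⟩

lemma wedge_mul {j m : ℕ} (A : Matrix (Fin j) (Fin j) ℤ) (B : Matrix (Fin j) (Fin m) ℤ) :
    wedge (A * B) = A.det.natAbs * wedge B := by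
  have key : ∀ e : Fin j → Fin m, ((A * B).submatrix id e).det.natAbs
      = A.det.natAbs * (B.submatrix id e).det.natAbs := by
    intro e
    have : (A * B).submatrix id e = A * B.submatrix id e := by
      ext i k; simp [Matrix.mul_apply]
    rw [this, Matrix.det_mul, Int.natAbs_mul]
  apply le_antisymm
  · refine Finset.sup_le fun e _ => ?_
    rw [key]; exact Nat.mul_le_mul_left _ (le_wedge B e)
  · by_cases h : wedge B = 0
    · simp [h]
    · obtain ⟨e, he⟩ := exists_wedge B h
      rw [← he, ← key]; exact le_wedge _ e

lemma wedge_cons {j m : ℕ} (w : Fin m → ℤ) (B : Matrix (Fin j) (Fin m) ℤ) (N : ℕ)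
    (hN : ∀ i, (w i).natAbs ≤ N) :
    wedge (Matrix.of (Fin.cons w B : Fin (j+1) → Fin m → ℤ)) ≤ (j+1) * N * wedge B := by
  refine Finset.sup_le fun e _ => ?_
  rw [Matrix.det_succ_row_zero]
  refine (Int.natAbs_sum_le _ _).trans ?_
  have : ∀ i ∈ (Finset.univ : Finset (Fin (j+1))), ((-1) ^ (i : ℕ) * ((Matrix.of (Fin.cons w B : Fin (j+1) → Fin m → ℤ)).submatrix id e) 0 i *
      (((Matrix.of (Fin.cons w B : Fin (j+1) → Fin m → ℤ)).submatrix id e).submatrix Fin.succ i.succAbove).det).natAbs ≤ N * wedge B := by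
    intro i _
    rw [Int.natAbs_mul, Int.natAbs_mul, Int.natAbs_pow]
    simp only [Int.natAbs_neg, Int.natAbs_one, one_pow, one_mul]
    refine Nat.mul_le_mul (hN (e i)) ?_
    exact le_wedge B (e ∘ i.succAbove)
  refine (Finset.sum_le_card_nsmul _ _ _ this).trans ?_
  simp [mul_assoc]

/-- Minkowski -/
lemma minkowski_wedge {j m : ℕ} (hj : 0 < j) (B : Matrix (Fin j) (Fin m) ℤ) (h : wedge B ≠ 0)
    (r : ℝ) (hr0 : 0 ≤ r) (hr : (wedge B : ℝ) ≤ r ^ j) :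
    ∃ x : Fin j → ℤ, x ≠ 0 ∧ ∀ i, |(((x ᵥ* B) i : ℤ) : ℝ)| ≤ j * r := by
  obtain ⟨e, he⟩ := exists_wedge B h
  set M : Matrix (Fin j) (Fin j) ℤ := B.submatrix id e with hM
  set MR : Matrix (Fin j) (Fin j) ℝ := M.map (Int.castRingHom ℝ) with hMR
  have hdet : MR.det = (M.det : ℝ) := by
    rw [hMR]; exact (RingHom.map_det (Int.castRingHom ℝ) M).symm
  have hdet0 : MR.det ≠ 0 := by
    rw [hdet]; intro h0
    have : M.det = 0 := by exact_mod_cast h0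
    rw [this] at he; exact h (by simpa using he.symm)
  have habs : |MR.det| = (wedge B : ℝ) := by
    rw [hdet, ← he]; simp [Nat.cast_natAbs]
  have hli : LinearIndependent ℝ MR.row := Matrix.linearIndependent_rows_of_det_ne_zero hdet0
  have : Nonempty (Fin j) := ⟨⟨0, hj⟩⟩
  let b : Module.Basis (Fin j) ℝ (Fin j → ℝ) := basisOfLinearIndependentOfCardEqFinrank hli (by simp)
  have hb : ∀ i, b i = MR i := by intro i; simp [b]; rfl
  have hfund := ZSpan.isAddFundamentalDomain' b (volume : Measure (Fin j → ℝ))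
  have hvol : volume (ZSpan.fundamentalDomain b) = ENNReal.ofReal (wedge B : ℝ) := by
    rw [ZSpan.volume_fundamentalDomain, ← habs]
    congr 3
    ext i k; simp [hb]
  have : Countable (Submodule.span ℤ (Set.range b)).toAddSubgroup :=
    inferInstanceAs (Countable (Submodule.span ℤ (Set.range b)))
  have : DiscreteTopology (Submodule.span ℤ (Set.range b)).toAddSubgroup :=
    inferInstanceAs (DiscreteTopology (Submodule.span ℤ (Set.range b)))
  obtain ⟨z, hz0, hz⟩ := exists_ne_zero_mem_lattice_of_measure_mul_two_pow_le_measure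
    (μ := (volume : Measure (Fin j → ℝ))) hfund (s := closedBall 0 r)
    (by intro x hx; simpa using hx) (convex_closedBall 0 r) (isCompact_closedBall 0 r)
    (by
      rw [hvol, Real.volume_pi_closedBall _ hr0]
      simp only [Module.finrank_fintype_fun_eq_card, Fintype.card_fin]
      rw [mul_pow, mul_comm, ENNReal.ofReal_mul (by positivity)]
      gcongr
      rw [ENNReal.ofReal_pow (by norm_num)]; simp)
  obtain ⟨z, hzm⟩ := z
  have hzm' : z ∈ Submodule.span ℤ (Set.range b) := hzm
  rw [Submodule.mem_span_range_iff_exists_fun] at hzm'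
  obtain ⟨x, hx⟩ := hzm'
  have hzx : ∀ l, z l = (((x ᵥ* M) l : ℤ) : ℝ) := by
    intro l
    rw [← hx]
    simp [Finset.sum_apply, hb, hMR, Matrix.vecMul, dotProduct]
  refine ⟨x, ?_, ?_⟩
  · rintro rfl
    apply hz0
    ext1
    simpa using hx.symm
  · intro i
    have hzl : ∀ l, |(((x ᵥ* M) l : ℤ) : ℝ)| ≤ r := by
      intro l; rw [← hzx]
      have : ‖z‖ ≤ r := by simpa using hz
      exact (norm_le_pi_norm z l).trans this
    -- Cramer
    have hcr : M *ᵥ (M.cramer (fun k => B k i)) = M.det • (fun k => B k i) :=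
      Matrix.mulVec_cramer M _
    have hc : ∀ l, (M.cramer (fun k => B k i) l).natAbs ≤ wedge B := by
      intro l
      rw [Matrix.cramer_apply]
      have : M.updateCol l (fun k => B k i) = B.submatrix id (Function.update e l i) := by
        ext a k
        by_cases hk : k = l
        · subst hk; simp
        · simp [hM, Matrix.updateCol_ne hk, Function.update_of_ne hk]
      rw [this]; exact le_wedge _ _
    have e1 : M.det * (x ᵥ* B) i = ∑ l, (x ᵥ* M) l * M.cramer (fun k => B k i) l := by
      have h2 : x ⬝ᵥ (M *ᵥ (M.cramer (fun k => B k i))) = (x ᵥ* M) ⬝ᵥ (M.cramer (fun k => B k i)) :=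
        Matrix.dotProduct_mulVec _ _ _
      rw [hcr, dotProduct_smul] at h2
      exact h2
    have hW : (0:ℝ) < wedge B := by exact_mod_cast Nat.pos_of_ne_zero h
    have e2 : (wedge B : ℝ) * |(((x ᵥ* B) i : ℤ) : ℝ)| ≤ wedge B * (j * r) := by
      calc (wedge B : ℝ) * |(((x ᵥ* B) i : ℤ) : ℝ)| = |((M.det * (x ᵥ* B) i : ℤ) : ℝ)| := by
            rw [← habs, hdet, ← abs_mul]; push_cast; rfl
        _ = |∑ l, (((x ᵥ* M) l : ℤ):ℝ) * ((M.cramer (fun k => B k i) l : ℤ) : ℝ)| := by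
            rw [e1]; push_cast; rfl
        _ ≤ ∑ l : Fin j, r * wedge B := by
            refine (Finset.abs_sum_le_sum_abs _ _).trans (Finset.sum_le_sum fun l _ => ?_)
            rw [abs_mul]
            refine mul_le_mul (hzl l) ?_ (abs_nonneg _) hr0
            have := hc l
            rw [← Int.cast_abs, Int.abs_eq_natAbs]; exact_mod_cast this
        _ = wedge B * (j * r) := by simp; ring
    exact le_of_mul_le_mul_left e2 hW

end Geo
section Geo2
open Matrix

def toQL (m : ℕ) : (Fin m → ℤ) →ₗ[ℤ] (Fin m → ℚ) where
  toFun z := fun i => (z i : ℚ)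
  map_add' a b := by ext i; simp
  map_smul' a b := by ext i; simp

lemma toQL_apply {m : ℕ} (z : Fin m → ℤ) (i : Fin m) : toQL m z i = (z i : ℚ) := rfl

lemma toQL_inj (m : ℕ) : Function.Injective (toQL m) := by
  intro a b h
  ext i
  have := congrFun h i
  simpa [toQL_apply] using this

structure IsB {j m : ℕ} (V : Submodule ℚ (Fin m → ℚ)) (B : Matrix (Fin j) (Fin m) ℤ) : Prop where
  mem : ∀ i, toQL m (B i) ∈ V
  li : LinearIndependent ℚ (fun i => toQL m (B i))
  gen : ∀ z, toQL m z ∈ V → ∃ x : Fin j → ℤ, x ᵥ* B = z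
  span : Submodule.span ℚ (Set.range fun i => toQL m (B i)) = V
  rank : Module.finrank ℚ V = j

lemma exists_isB {m : ℕ} (V : Submodule ℚ (Fin m → ℚ)) :
    ∃ B : Matrix (Fin (Module.finrank ℚ V)) (Fin m) ℤ, IsB V B := by
  suffices h : ∃ (j : ℕ) (B : Matrix (Fin j) (Fin m) ℤ), IsB V B by
    obtain ⟨j, B, hB⟩ := h
    obtain rfl := hB.rank
    exact ⟨B, hB⟩
  let L : Submodule ℤ (Fin m → ℤ) := (V.restrictScalars ℤ).comap (toQL m)
  let b := Module.finBasis ℤ L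
  let B : Matrix (Fin (Module.finrank ℤ L)) (Fin m) ℤ := Matrix.of fun i => (b i : Fin m → ℤ)
  have hmem : ∀ i, toQL m (B i) ∈ V := fun i => (b i).2
  have hli : LinearIndependent ℚ (fun i => toQL m (B i)) := by
    rw [← LinearIndependent.iff_fractionRing ℤ ℚ]
    have h1 := b.linearIndependent.map' ((toQL m).comp L.subtype)
      (LinearMap.ker_eq_bot.2 ((toQL_inj m).comp L.injective_subtype))
    exact h1
  have hgen : ∀ z, toQL m z ∈ V → ∃ x : Fin (Module.finrank ℤ L) → ℤ, x ᵥ* B = z := by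
    intro z hz
    refine ⟨fun i => b.repr ⟨z, hz⟩ i, ?_⟩
    have := congrArg Subtype.val (b.sum_repr ⟨z, hz⟩)
    rw [Matrix.vecMul_eq_sum]
    rw [AddSubmonoidClass.coe_finsetSum] at this
    exact this
  have hspan : Submodule.span ℚ (Set.range fun i => toQL m (B i)) = V := by
    apply le_antisymm
    · rw [Submodule.span_le]; rintro _ ⟨i, rfl⟩; exact hmem i
    · intro v hv
      obtain ⟨d, hd⟩ := IsLocalization.exist_integer_multiples_of_finite (nonZeroDivisors ℤ) v
      choose z hz using hd
      have hd0 : ((d : ℤ) : ℚ) ≠ 0 := by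
        have := nonZeroDivisors.coe_ne_zero d
        exact_mod_cast this
      have hzv : toQL m z = ((d : ℤ) : ℚ) • v := by
        ext i
        have := hz i
        simp only [toQL_apply, Pi.smul_apply, smul_eq_mul]
        simpa using this
      obtain ⟨x, hx⟩ := hgen z (by rw [hzv]; exact V.smul_mem _ hv)
      have : v = ((d : ℤ) : ℚ)⁻¹ • toQL m z := by rw [hzv, smul_smul, inv_mul_cancel₀ hd0, one_smul]
      rw [this, ← hx, Matrix.vecMul_eq_sum, map_sum]
      refine Submodule.smul_mem _ _ (Submodule.sum_mem _ fun i _ => ?_)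
      rw [map_smul, ← Int.cast_smul_eq_zsmul ℚ]
      exact Submodule.smul_mem _ _ (Submodule.subset_span ⟨i, rfl⟩)
  refine ⟨_, B, hmem, hli, hgen, hspan, ?_⟩
  rw [← hspan, finrank_span_eq_card hli, Fintype.card_fin]

lemma wedge_ne_zero {j m : ℕ} (B : Matrix (Fin j) (Fin m) ℤ)
    (h : LinearIndependent ℚ (fun i => toQL m (B i))) : wedge B ≠ 0 := by
  set MQ : Matrix (Fin j) (Fin m) ℚ := B.map (Int.castRingHom ℚ) with hMQ
  have h1 : LinearIndependent ℚ MQ.row := h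
  have h2 := h1.rank_matrix
  rw [Matrix.rank_eq_finrank_span_cols, Fintype.card_fin] at h2
  have h3 := Submodule.exists_fun_fin_finrank_span_eq ℚ (Set.range MQ.col)
  rw [h2] at h3
  obtain ⟨f, hf, -, hfl⟩ := h3
  choose e he using hf
  have h4 : LinearIndependent ℚ (MQ.submatrix id e).col := by
    have h40 : (MQ.submatrix id e).col = f := by
      funext i; rw [← he]; rfl
    rw [h40]; exact hfl
  rw [Matrix.linearIndependent_cols_iff_isUnit, Matrix.isUnit_iff_isUnit_det, isUnit_iff_ne_zero] at h4
  have h5 : MQ.submatrix id e = (B.submatrix id e).map (Int.castRingHom ℚ) := rfl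
  rw [h5] at h4
  have h6 := RingHom.map_det (Int.castRingHom ℚ) (B.submatrix id e)
  intro h0
  have h7 := le_wedge B e
  rw [h0] at h7
  have h8 : (B.submatrix id e).det = 0 := by simpa using h7
  rw [h8] at h6
  exact h4 (by simpa using h6.symm)

lemma vecMul_ne_zero {j m : ℕ} (B : Matrix (Fin j) (Fin m) ℤ) (h : wedge B ≠ 0)
    (x : Fin j → ℤ) (hx : x ≠ 0) : x ᵥ* B ≠ 0 := by
  intro h0
  obtain ⟨e, he⟩ := exists_wedge B h
  have : (B.submatrix id e).det = 0 := by
    rw [← Matrix.exists_vecMul_eq_zero_iff]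
    refine ⟨x, hx, ?_⟩
    ext i
    exact congrFun h0 (e i)
  rw [this] at he
  exact h (by simpa using he.symm)

variable {p : ℕ} [Fact p.Prime]

noncomputable def ell {m : ℕ} (Y : Fin m → ℚ_[p]) (z : Fin m → ℤ) : ℚ_[p] := ∑ i, (z i : ℚ_[p]) * Y i

lemma ell_vecMul {j m : ℕ} (Y : Fin m → ℚ_[p]) (x : Fin j → ℤ) (B : Matrix (Fin j) (Fin m) ℤ) :
    ell Y (x ᵥ* B) = ∑ i, (x i : ℚ_[p]) * ell Y (B i) := by
  simp only [ell, Matrix.vecMul, dotProduct, Int.cast_sum, Int.cast_mul, Finset.sum_mul, Finset.mul_sum]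
  rw [Finset.sum_comm]
  simp [mul_assoc]

lemma norm_ell_vecMul_le {j m : ℕ} (Y : Fin m → ℚ_[p]) (x : Fin j → ℤ) (B : Matrix (Fin j) (Fin m) ℤ)
    (c : ℝ) (hc : 0 ≤ c) (h : ∀ i, ‖ell Y (B i)‖ ≤ c) : ‖ell Y (x ᵥ* B)‖ ≤ c := by
  rw [ell_vecMul]
  refine IsUltrametricDist.norm_sum_le_of_forall_le_of_nonneg hc fun i _ => ?_
  rw [norm_mul]
  calc _ ≤ 1 * c := mul_le_mul (Padic.norm_int_le_one _) (h i) (norm_nonneg _) zero_le_one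
    _ = c := one_mul c

noncomputable def idx {j m : ℕ} (t : ℕ) (Y : Fin m → ℚ_[p]) (B : Matrix (Fin j) (Fin m) ℤ) : ℝ≥0 :=
  max 1 ((p : ℝ≥0) ^ t * Finset.univ.sup fun i => ‖ell Y (B i)‖₊)

noncomputable def psi {j m : ℕ} (t : ℕ) (Y : Fin m → ℚ_[p]) (B : Matrix (Fin j) (Fin m) ℤ) : ℝ :=
  wedge B * (idx t Y B : ℝ)

lemma one_le_natAbs_mul_norm (k : ℤ) (hk : k ≠ 0) : 1 ≤ (k.natAbs : ℝ) * ‖(k : ℚ_[p])‖ := by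
  have hp : (0:ℝ) < p := by exact_mod_cast (Fact.out : p.Prime).pos
  have h1 : ‖(k : ℚ_[p])‖ = (p : ℝ) ^ (-(padicValInt p k : ℤ)) := by
    rw [Padic.norm_eq_zpow_neg_valuation (by exact_mod_cast hk), Padic.valuation_intCast]
  have h2 : ((p : ℤ) ^ (padicValInt p k)) ∣ k := by
    rw [padicValInt_dvd_iff]; right; exact le_rfl
  have h3 : p ^ padicValInt p k ≤ k.natAbs := by
    apply Nat.le_of_dvd (Int.natAbs_pos.2 hk)
    have := Int.natAbs_dvd_natAbs.2 h2
    simpa [Int.natAbs_pow] using this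
  rw [h1, _root_.zpow_neg, zpow_natCast, ← div_eq_mul_inv, le_div_iff₀ (by positivity), one_mul]
  exact_mod_cast h3

lemma psi_A {j j' m : ℕ} (t : ℕ) (Y : Fin m → ℚ_[p]) (V : Submodule ℚ (Fin m → ℚ)) (w : Fin m → ℤ)
    (hw : toQL m w ∉ V)
    (B : Matrix (Fin j) (Fin m) ℤ) (B' : Matrix (Fin j') (Fin m) ℤ) (hB : IsB V B)
    (hB' : IsB (V ⊔ Submodule.span ℚ {toQL m w}) B') (hwt : (p:ℝ) ^ t * ‖ell Y w‖ ≤ 1) (N : ℕ)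
    (hN : ∀ i, (w i).natAbs ≤ N) : psi t Y B' ≤ (j + 1) * N * psi t Y B := by
  have hjj : j' = j + 1 := by
    rw [← hB'.rank, ← hB.rank]; exact Submodule.finrank_sup_span_singleton hw
  subst hjj
  set C : Matrix (Fin (j+1)) (Fin m) ℤ := Matrix.of (Fin.cons w B : Fin (j+1) → Fin m → ℤ) with hC
  have hC0 : C 0 = w := rfl
  have hCs : ∀ i : Fin j, C i.succ = B i := fun i => rfl
  have hCmem : ∀ i, toQL m (C i) ∈ V ⊔ Submodule.span ℚ {toQL m w} := by
    intro i
    refine Fin.cases ?_ (fun i => ?_) i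
    · rw [hC0]; exact Submodule.mem_sup_right (Submodule.mem_span_singleton_self _)
    · rw [hCs]; exact Submodule.mem_sup_left (hB.mem i)
  choose A hA using fun i => hB'.gen _ (hCmem i)
  have hCA : C = Matrix.of A * B' := by
    ext i k
    rw [← hA i]; rfl
  have hCli : LinearIndependent ℚ (fun i => toQL m (C i)) := by
    have : (fun i => toQL m (C i)) = (Fin.cons (toQL m w) (fun i => toQL m (B i)) : Fin (j+1) → Fin m → ℚ) := by
      funext i
      refine Fin.cases ?_ (fun i => ?_) i
      · rfl
      · rfl
    rw [this, linearIndependent_finCons, hB.span]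
    exact ⟨hB.li, hw⟩
  have hCw := wedge_ne_zero C hCli
  have hwm := wedge_mul (Matrix.of A) B'
  rw [← hCA] at hwm
  set k := (Matrix.of A).det with hk
  have hk0 : k ≠ 0 := by
    intro h0; rw [h0] at hwm; exact hCw (by simpa using hwm)
  have hwc := wedge_cons w B N hN
  rw [← hC] at hwc
  have hpt : (0:ℝ) < (p:ℝ)^t := by
    have : (0:ℝ) < p := by exact_mod_cast (Fact.out : p.Prime).pos
    positivity
  -- index bound
  have hCell : ∀ i, ‖ell Y (C i)‖ ≤ (idx t Y B : ℝ) / (p:ℝ)^t := by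
    intro i
    rw [le_div_iff₀ hpt, mul_comm]
    refine Fin.cases ?_ (fun i => ?_) i
    · rw [hC0]; refine hwt.trans ?_
      exact_mod_cast (le_max_left (1:ℝ≥0) _)
    · rw [hCs]
      have h1 : ‖ell Y (B i)‖₊ ≤ Finset.univ.sup fun i => ‖ell Y (B i)‖₊ :=
        Finset.le_sup (f := fun i => ‖ell Y (B i)‖₊) (Finset.mem_univ i)
      have h2 : (p:ℝ≥0)^t * ‖ell Y (B i)‖₊ ≤ idx t Y B :=
        (mul_le_mul_right h1 _).trans (le_max_right _ _)
      exact_mod_cast h2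
  have hB'ell : ∀ l, ‖(k : ℚ_[p])‖ * ‖ell Y (B' l)‖ ≤ (idx t Y B : ℝ) / (p:ℝ)^t := by
    intro l
    have h1 : (Matrix.of A).adjugate * C = k • B' := by
      rw [hCA, ← Matrix.mul_assoc, Matrix.adjugate_mul, Matrix.smul_mul, Matrix.one_mul]
    have h2 : (Matrix.of A).adjugate l ᵥ* C = k • B' l := by
      have := congrFun h1 l
      exact this
    have h3 := norm_ell_vecMul_le Y ((Matrix.of A).adjugate l) C _ (by positivity) hCell
    rw [h2] at h3
    have h4 : ell Y (k • B' l) = (k : ℚ_[p]) * ell Y (B' l) := by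
      simp [ell, Finset.mul_sum, mul_assoc]
    rwa [h4, norm_mul] at h3
  have h1k := one_le_natAbs_mul_norm (p := p) k hk0
  have hidx : (idx t Y B' : ℝ) ≤ k.natAbs * idx t Y B := by
    have hb1 : (1:ℝ) ≤ idx t Y B := by exact_mod_cast (le_max_left (1:ℝ≥0) _)
    have hk1 : (1:ℝ) ≤ k.natAbs := by exact_mod_cast Int.natAbs_pos.2 hk0
    have hsup : (Finset.univ.sup fun i => ‖ell Y (B' i)‖₊) ≤ (k.natAbs : ℝ≥0) * idx t Y B / (p:ℝ≥0)^t := by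
      refine Finset.sup_le fun l _ => ?_
      rw [← NNReal.coe_le_coe]
      push_cast
      have := hB'ell l
      calc ‖ell Y (B' l)‖ ≤ (k.natAbs * ‖(k : ℚ_[p])‖) * ‖ell Y (B' l)‖ :=
            le_mul_of_one_le_left (norm_nonneg _) h1k
        _ = k.natAbs * (‖(k : ℚ_[p])‖ * ‖ell Y (B' l)‖) := by ring
        _ ≤ k.natAbs * ((idx t Y B : ℝ) / (p:ℝ)^t) := by gcongr
        _ = _ := by ring
    have hsup' : (p:ℝ≥0)^t * (Finset.univ.sup fun i => ‖ell Y (B' i)‖₊) ≤ (k.natAbs : ℝ≥0) * idx t Y B := by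
      have hpt' : (0:ℝ≥0) < (p:ℝ≥0)^t := by exact_mod_cast hpt
      rwa [le_div_iff₀ hpt', mul_comm] at hsup
    have : idx t Y B' ≤ (k.natAbs : ℝ≥0) * idx t Y B := by
      refine max_le ?_ hsup'
      have : (1:ℝ) ≤ k.natAbs * idx t Y B := by nlinarith
      exact_mod_cast this
    exact_mod_cast this
  calc psi t Y B' ≤ wedge B' * (k.natAbs * idx t Y B) := by unfold psi; gcongr
    _ = (wedge C : ℝ) * idx t Y B := by rw [hwm]; push_cast; ring
    _ ≤ (((j + 1) * N * wedge B : ℕ) : ℝ) * idx t Y B := by gcongr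
    _ = _ := by unfold psi; push_cast; ring

end Geo2
section Geo3
open Matrix
variable {p : ℕ} [Fact p.Prime]

lemma approx_ratio (a b : ℚ_[p]) (ha : a ≠ 0) (hab : ‖b‖ ≤ ‖a‖) (u : ℕ) :
    ∃ k : ℤ, ‖b - k * a‖ ≤ ‖a‖ / (p:ℝ)^u := by
  have hx : ‖b / a‖ ≤ 1 := by
    rw [norm_div]; exact div_le_one_of_le₀ hab (norm_nonneg _)
  set x : ℤ_[p] := ⟨b / a, hx⟩ with hxd
  have h1 := PadicInt.appr_spec u x
  rw [← PadicInt.norm_le_pow_iff_mem_span_pow] at h1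
  refine ⟨(x.appr u : ℤ), ?_⟩
  have h2 : b - ((x.appr u : ℤ) : ℚ_[p]) * a = ((x - (x.appr u : ℤ_[p]) : ℤ_[p]) : ℚ_[p]) * a := by
    push_cast
    rw [sub_mul, hxd]
    simp only
    rw [div_mul_cancel₀ _ ha]
  rw [h2, norm_mul]
  have h3 : ‖((x - (x.appr u : ℤ_[p]) : ℤ_[p]) : ℚ_[p])‖ ≤ (p:ℝ)^(-(u:ℤ)) := by
    rw [PadicInt.padic_norm_e_of_padicInt]; exact h1
  rw [_root_.zpow_neg, zpow_natCast] at h3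
  rw [div_eq_inv_mul]
  gcongr

lemma det_updateCol_one {j : ℕ} (i0 : Fin j) (c : Fin j → ℤ) :
    ((1 : Matrix (Fin j) (Fin j) ℤ).updateCol i0 c).det = c i0 := by
  rw [← Matrix.cramer_apply, Matrix.cramer_one]; rfl

lemma exists_T {j m : ℕ} (t : ℕ) (Y : Fin m → ℚ_[p]) (B : Matrix (Fin j) (Fin m) ℤ) :
    ∃ T : Matrix (Fin j) (Fin j) ℤ, (T.det.natAbs : ℝ) = idx t Y B ∧
      ∀ i, (p:ℝ)^t * ‖ell Y ((T * B) i)‖ ≤ 1 := by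
  have hp0 : (0:ℝ) < p := by exact_mod_cast (Fact.out : p.Prime).pos
  have hpt : (0:ℝ) < (p:ℝ)^t := by positivity
  set S := Finset.univ.sup fun i => ‖ell Y (B i)‖₊ with hS
  by_cases hle : (p:ℝ≥0)^t * S ≤ 1
  · refine ⟨1, ?_, fun i => ?_⟩
    · simp [idx, ← hS, max_eq_left hle]
    · rw [Matrix.one_mul]
      have h1 : ‖ell Y (B i)‖₊ ≤ S :=
        Finset.le_sup (f := fun i => ‖ell Y (B i)‖₊) (Finset.mem_univ i)
      have h2 : (p:ℝ≥0)^t * ‖ell Y (B i)‖₊ ≤ 1 := (mul_le_mul_right h1 _).trans hle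
      exact_mod_cast h2
  · push Not at hle
    have hne : (Finset.univ : Finset (Fin j)).Nonempty := by
      by_contra h0
      rw [Finset.not_nonempty_iff_eq_empty] at h0
      rw [hS, h0] at hle
      simp at hle
    obtain ⟨i0, -, hi0⟩ := Finset.exists_mem_eq_sup Finset.univ hne (fun i => ‖ell Y (B i)‖₊)
    rw [← hS] at hi0
    have hmax : ∀ i, ‖ell Y (B i)‖ ≤ ‖ell Y (B i0)‖ := by
      intro i
      have h1 : ‖ell Y (B i)‖₊ ≤ S :=
        Finset.le_sup (f := fun i => ‖ell Y (B i)‖₊) (Finset.mem_univ i)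
      rw [hi0] at h1
      exact_mod_cast h1
    have ha : ell Y (B i0) ≠ 0 := by
      intro h0
      rw [hi0, h0] at hle
      simp at hle
    have hnorm := Padic.norm_eq_zpow_neg_valuation ha
    set s := (ell Y (B i0)).valuation
    have hgt : 1 < (p:ℝ)^t * ‖ell Y (B i0)‖ := by
      rw [hi0] at hle; exact_mod_cast hle
    have hpu : (p:ℝ)^t * ‖ell Y (B i0)‖ = (p:ℝ)^((t:ℤ) - s) := by
      rw [hnorm, ← zpow_natCast, ← zpow_add₀ hp0.ne']; rfl
    have hts : 0 < (t:ℤ) - s := by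
      rw [hpu] at hgt
      exact (one_lt_zpow_iff_right₀ (by exact_mod_cast (Fact.out : p.Prime).one_lt)).1 hgt
    obtain ⟨u, hu⟩ := Int.eq_ofNat_of_zero_le hts.le
    rw [hu, zpow_natCast] at hpu
    choose k hk using fun i => approx_ratio (ell Y (B i0)) (ell Y (B i)) ha (hmax i) u
    set c : Fin j → ℤ := fun i => if i = i0 then (p:ℤ)^u else - k i with hc
    refine ⟨(1 : Matrix (Fin j) (Fin j) ℤ).updateCol i0 c, ?_, fun i => ?_⟩
    · rw [det_updateCol_one, hc]
      simp only [if_true, Int.natAbs_pow, Int.natAbs_natCast]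
      have : idx t Y B = (p:ℝ≥0)^u := by
        unfold idx
        rw [← hS, max_eq_right hle.le, hi0]
        rw [← NNReal.coe_inj]; push_cast; exact hpu
      rw [this]; push_cast; rfl
    · have hr : ((1 : Matrix (Fin j) (Fin j) ℤ).updateCol i0 c * B) i
          = ((1 : Matrix (Fin j) (Fin j) ℤ).updateCol i0 c) i ᵥ* B := rfl
      rw [hr, ell_vecMul]
      by_cases hi : i = i0
      · subst hi
        rw [Finset.sum_eq_single i]
        · simp only [updateCol_self, hc, if_true]
          push_cast
          rw [norm_mul, norm_pow, Padic.norm_p, inv_pow]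
          rw [← mul_assoc, mul_comm ((p:ℝ)^t), mul_assoc, hpu]
          rw [inv_mul_cancel₀ (by positivity)]
        · intro b _ hb
          rw [updateCol_ne hb, Matrix.one_apply_ne (Ne.symm hb)]; simp
        · simp
      · have hsum : ∑ l, ((((1 : Matrix (Fin j) (Fin j) ℤ).updateCol i0 c) i l : ℤ) : ℚ_[p]) * ell Y (B l)
            = ell Y (B i) - k i * ell Y (B i0) := by
          rw [Finset.sum_eq_add_of_mem i i0 (Finset.mem_univ _) (Finset.mem_univ _) hi]
          · rw [updateCol_ne hi, Matrix.one_apply_eq, updateCol_self, hc]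
            simp [hi, sub_eq_add_neg]
          · intro l _ hl
            rw [updateCol_ne hl.2, Matrix.one_apply_ne (Ne.symm hl.1)]; simp
        rw [hsum]
        calc (p:ℝ)^t * ‖ell Y (B i) - k i * ell Y (B i0)‖ ≤ (p:ℝ)^t * (‖ell Y (B i0)‖ / (p:ℝ)^u) := by
              gcongr; exact hk i
          _ = (p:ℝ)^u / (p:ℝ)^u := by rw [← hpu]; ring
          _ ≤ 1 := div_self_le_one _

lemma psi_B {j m : ℕ} (t : ℕ) (Y : Fin m → ℚ_[p]) (V : Submodule ℚ (Fin m → ℚ))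
    (B : Matrix (Fin j) (Fin m) ℤ) (hB : IsB V B) (hj : 0 < j) (R : ℝ) (hR0 : 0 < R)
    (hR : ∀ z : Fin m → ℤ, z ≠ 0 → (p:ℝ)^t * ‖ell Y z‖ ≤ 1 → ∃ i, R ≤ |(z i : ℝ)|) :
    (R / m) ^ j ≤ psi t Y B := by
  have hp0 : (0:ℝ) < p := by exact_mod_cast (Fact.out : p.Prime).pos
  have hjm : j ≤ m := by
    have := hB.li.fintype_card_le_finrank
    simpa using this
  have hm : 0 < m := lt_of_lt_of_le hj hjm
  by_contra hlt
  push Not at hlt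
  obtain ⟨T, hT, hTB⟩ := exists_T t Y B
  have hw := wedge_ne_zero B hB.li
  have hpsi : (wedge (T * B) : ℝ) = psi t Y B := by
    rw [wedge_mul, Nat.cast_mul, hT, psi, mul_comm]
  have hidx1 : (1:ℝ) ≤ idx t Y B := by exact_mod_cast (le_max_left (1:ℝ≥0) _)
  have hpsi1 : 0 < psi t Y B := by
    unfold psi
    have : (0:ℝ) < wedge B := by exact_mod_cast Nat.pos_of_ne_zero hw
    positivity
  have hw' : wedge (T * B) ≠ 0 := by
    intro h0; rw [h0] at hpsi; simp at hpsi; linarith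
  set r := (psi t Y B) ^ ((1:ℝ) / j) with hr
  have hr0 : 0 ≤ r := by positivity
  have hrj : r ^ j = psi t Y B := by
    rw [hr, ← Real.rpow_natCast, ← Real.rpow_mul hpsi1.le]
    have : (1:ℝ) / j * j = 1 := by field_simp
    rw [this, Real.rpow_one]
  have hrR : r < R / m := by
    apply lt_of_pow_lt_pow_left₀ j (by positivity)
    rw [hrj]; exact hlt
  obtain ⟨x, hx0, hx⟩ := minkowski_wedge hj (T * B) hw' r hr0 (by rw [hpsi, hrj])
  have hz0 := vecMul_ne_zero (T * B) hw' x hx0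
  obtain ⟨i, hi⟩ := hR _ hz0 (by
    have := norm_ell_vecMul_le Y x (T * B) (1 / (p:ℝ)^t) (by positivity) (fun i => by
      rw [le_div_iff₀ (by positivity), mul_comm]; exact hTB i)
    rw [le_div_iff₀ (by positivity), mul_comm] at this
    exact this)
  have h1 := hx i
  have h2 : (j:ℝ) * r < R := by
    have hmR : (0:ℝ) < m := by exact_mod_cast hm
    have : (m:ℝ) * r < R := by rwa [lt_div_iff₀ hmR, mul_comm] at hrR
    have hjm' : (j:ℝ) ≤ m := by exact_mod_cast hjm
    nlinarith
  linarith

end Geo3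
section Zp
open Filter Topology

noncomputable instance instMeasZp (p : ℕ) [Fact p.Prime] : MeasurableSpace ℤ_[p] := borel _
instance instBorelZp (p : ℕ) [Fact p.Prime] : BorelSpace ℤ_[p] := ⟨rfl⟩

variable {p : ℕ} [Fact p.Prime]

lemma p_pos_real (p : ℕ) [Fact p.Prime] : (0:ℝ) < p := by
  exact_mod_cast (Fact.out : p.Prime).pos
lemma one_lt_p_real (p : ℕ) [Fact p.Prime] : (1:ℝ) < p := by
  exact_mod_cast (Fact.out : p.Prime).one_lt

def bl (x : ℤ_[p]) (k : ℕ) : Set ℤ_[p] := closedBall x ((p:ℝ)^(-(k:ℤ)))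

lemma mem_bl {x y : ℤ_[p]} {k : ℕ} : y ∈ bl x k ↔ ‖y - x‖ ≤ (p:ℝ)^(-(k:ℤ)) := by
  rw [bl, mem_closedBall, dist_eq_norm]

lemma self_mem_bl (x : ℤ_[p]) (k : ℕ) : x ∈ bl x k := by
  rw [mem_bl, sub_self, norm_zero]; have := p_pos_real p; positivity

lemma bl_eq_of_mem {x y : ℤ_[p]} {k : ℕ} (h : y ∈ bl x k) : bl x k = bl y k :=
  IsUltrametricDist.closedBall_eq_of_mem h

lemma bl_anti (x : ℤ_[p]) {k l : ℕ} (h : k ≤ l) : bl x l ⊆ bl x k := by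
  apply closedBall_subset_closedBall
  apply zpow_le_zpow_right₀ (one_lt_p_real p).le
  omega

lemma isOpen_bl (x : ℤ_[p]) (k : ℕ) : IsOpen (bl x k) := by
  apply IsUltrametricDist.isOpen_closedBall
  have := p_pos_real p; positivity

lemma bl_zero (x : ℤ_[p]) : bl x 0 = Set.univ := by
  ext y; simp [mem_bl, PadicInt.norm_le_one]

variable (ν : Measure ℤ_[p]) [ν.IsAddHaarMeasure]

lemma meas_bl (x y : ℤ_[p]) (k : ℕ) : ν (bl x k) = ν (bl y k) := by
  unfold bl
  rw [Measure.addHaar_closedBall_center ν x, Measure.addHaar_closedBall_center ν y]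

lemma bl_succ_cover (x : ℤ_[p]) (k : ℕ) :
    bl x k = ⋃ a : Fin p, bl (x + ((a : ℕ) : ℤ_[p]) * (p:ℤ_[p])^k) (k+1) := by
  ext y
  rw [Set.mem_iUnion]
  constructor
  · intro h
    rw [mem_bl, PadicInt.norm_le_pow_iff_mem_span_pow, Ideal.mem_span_singleton] at h
    obtain ⟨w, hw⟩ := h
    obtain ⟨h1, h2⟩ := PadicInt.zmodRepr_spec w
    refine ⟨⟨w.zmodRepr, h1⟩, ?_⟩
    rw [mem_bl]
    have h3 : y - (x + (((⟨w.zmodRepr, h1⟩ : Fin p) : ℕ) : ℤ_[p]) * (p:ℤ_[p])^k) = (p:ℤ_[p])^k * (w - w.zmodRepr) := by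
      rw [mul_sub, ← hw]; ring
    rw [h3, PadicInt.norm_le_pow_iff_mem_span_pow, Ideal.mem_span_singleton, pow_succ]
    rw [PadicInt.maximalIdeal_eq_span_p, Ideal.mem_span_singleton] at h2
    exact mul_dvd_mul_left _ h2
  · rintro ⟨a, h⟩
    have h1 := bl_anti _ (Nat.le_succ k) h
    rw [mem_bl] at h1 ⊢
    have h2 : y - x = (y - (x + ((a:ℕ):ℤ_[p]) * (p:ℤ_[p])^k)) + ((a:ℕ):ℤ_[p]) * (p:ℤ_[p])^k := by ring
    rw [h2]
    refine (PadicInt.nonarchimedean _ _).trans (max_le h1 ?_)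
    rw [norm_mul, PadicInt.norm_p_pow]
    have := p_pos_real p
    exact mul_le_of_le_one_left (by positivity) (PadicInt.norm_le_one _)

lemma meas_bl_succ (x : ℤ_[p]) (k : ℕ) : ν (bl x k) = p * ν (bl x (k+1)) := by
  rw [bl_succ_cover, measure_iUnion]
  · simp_rw [fun a : Fin p => meas_bl ν (x + ((a:ℕ):ℤ_[p]) * (p:ℤ_[p])^k) x (k+1)]
    rw [tsum_fintype, Finset.sum_const, Finset.card_univ, Fintype.card_fin, nsmul_eq_mul]
  · intro a b hab
    rw [Function.onFun, Set.disjoint_left]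
    intro y ha hb
    apply hab
    rw [mem_bl] at ha hb
    have h1 : ‖(((a:ℕ):ℤ_[p]) - (b:ℕ)) * (p:ℤ_[p])^k‖ ≤ (p:ℝ)^(-((k+1:ℕ):ℤ)) := by
      have : (((a:ℕ):ℤ_[p]) - (b:ℕ)) * (p:ℤ_[p])^k
        = (y - (x + ((b:ℕ):ℤ_[p]) * (p:ℤ_[p])^k)) + -(y - (x + ((a:ℕ):ℤ_[p]) * (p:ℤ_[p])^k)) := by ring
      rw [this]
      refine (PadicInt.nonarchimedean _ _).trans (max_le hb ?_)
      rw [norm_neg]; exact ha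
    have hp := p_pos_real p
    rw [norm_mul, PadicInt.norm_p_pow] at h1
    have h2 : ‖(((a:ℕ):ℤ_[p]) - (b:ℕ))‖ < 1 := by
      by_contra hc
      push Not at hc
      have h3 : (p:ℝ)^(-(k:ℤ)) ≤ (p:ℝ)^(-((k+1:ℕ):ℤ)) := by
        refine le_trans ?_ h1
        exact le_mul_of_one_le_left (by positivity) hc
      rw [zpow_le_zpow_iff_right₀ (one_lt_p_real p)] at h3
      push_cast at h3; omega
    have h3 : (((a:ℕ):ℤ_[p]) - (b:ℕ)) = (((a:ℕ):ℤ) - ((b:ℕ):ℤ) : ℤ) := by push_cast; rfl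
    rw [h3, PadicInt.norm_int_lt_one_iff_dvd] at h2
    have ha' := a.2
    have hb' := b.2
    ext
    obtain ⟨c, hc⟩ := h2
    have hp' : (0:ℤ) < p := by exact_mod_cast (Fact.out : p.Prime).pos
    have : c = 0 := by
      have h5 : (p:ℤ) * c < p * 1 := by omega
      have h6 : (p:ℤ) * (-1) < p * c := by omega
      have h7 := lt_of_mul_lt_mul_left h5 hp'.le
      have h8 := lt_of_mul_lt_mul_left h6 hp'.le
      omega
    rw [this] at hc
    omega
  · intro a; exact (isOpen_bl _ _).measurableSet

lemma meas_bl_add (x : ℤ_[p]) (k l : ℕ) : ν (bl x k) = (p:ℝ≥0∞)^l * ν (bl x (k+l)) := by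
  induction l with
  | zero => simp
  | succ l ih => rw [ih, meas_bl_succ, pow_succ, mul_assoc]; rfl

lemma meas_small_ball (z : ℤ_[p]) (k : ℕ) (δ : ℝ) (hδ : 0 < δ) (hδ1 : δ ≤ 1) :
    ν {x | ‖x - z‖ < δ * (p:ℝ)^(-(k:ℤ))} ≤ ENNReal.ofReal (p * δ) * ν (bl z k) := by
  have hp := p_pos_real p
  obtain ⟨l, hl1, hl2⟩ := exists_nat_pow_near_of_lt_one (y := (p:ℝ)⁻¹) hδ hδ1 (by positivity)
    (inv_lt_one_of_one_lt₀ (one_lt_p_real p))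
  have hsub : {x | ‖x - z‖ < δ * (p:ℝ)^(-(k:ℤ))} ⊆ bl z (k+l) := by
    intro x hx
    rw [mem_bl]
    refine (le_of_lt hx).trans ?_
    have : (p:ℝ)^(-((k+l:ℕ):ℤ)) = (p:ℝ)⁻¹^l * (p:ℝ)^(-(k:ℤ)) := by
      push_cast
      rw [neg_add, add_comm, zpow_add₀ hp.ne', inv_pow, zpow_neg, zpow_natCast]
    rw [this]
    gcongr
  refine (measure_mono hsub).trans ?_
  rw [meas_bl_add ν z k l, ← mul_assoc]
  have h1 : (1:ℝ≥0∞) ≤ ENNReal.ofReal (p * δ) * (p:ℝ≥0∞)^l := by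
    rw [← ENNReal.ofReal_natCast, ← ENNReal.ofReal_pow hp.le, ← ENNReal.ofReal_mul (by positivity),
      ← ENNReal.ofReal_one]
    apply ENNReal.ofReal_le_ofReal
    rw [inv_pow, pow_succ] at hl1
    have : (p:ℝ)^l * p * δ ≥ 1 := by
      have h3 := hl1
      rw [inv_lt_iff_one_lt_mul₀ (by positivity)] at h3
      linarith
    linarith
  calc _ = 1 * ν (bl z (k+l)) := (one_mul _).symm
    _ ≤ _ := by gcongr

end Zp
section Ser
open Filter Topology
variable {p : ℕ} [Fact p.Prime]

noncomputable def ev (g : ℕ → ℚ_[p]) (x : ℤ_[p]) : ℚ_[p] := ∑' k, g k * (x : ℚ_[p])^k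

lemma norm_term_le (a : ℚ_[p]) (x : ℤ_[p]) (k : ℕ) : ‖a * (x : ℚ_[p])^k‖ ≤ ‖a‖ := by
  rw [norm_mul, norm_pow]
  exact mul_le_of_le_one_right (norm_nonneg _) (pow_le_one₀ (norm_nonneg _) x.2)

lemma ev_summable {g : ℕ → ℚ_[p]} (hg : Tendsto g atTop (𝓝 0)) (x : ℤ_[p]) :
    Summable fun k => g k * (x : ℚ_[p])^k := by
  apply NonarchimedeanAddGroup.summable_of_tendsto_cofinite_zero
  rw [Nat.cofinite_eq_atTop]
  exact squeeze_zero_norm (fun k => norm_term_le _ _ _) (tendsto_zero_iff_norm_tendsto_zero.1 hg)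

lemma ev_norm_le (g : ℕ → ℚ_[p]) (x : ℤ_[p]) (c : ℝ) (h : ∀ k, ‖g k‖ ≤ c) : ‖ev g x‖ ≤ c :=
  IsUltrametricDist.norm_tsum_le_of_forall_le fun k => (norm_term_le _ _ _).trans (h k)

lemma ev_zero_eq {g : ℕ → ℚ_[p]} : ev g 0 = g 0 := by
  unfold ev
  rw [tsum_eq_single 0]
  · simp
  · intro k hk; simp [hk]

lemma ev_step {g : ℕ → ℚ_[p]} (hg : Tendsto g atTop (𝓝 0)) (x : ℤ_[p]) :
    ev g x = g 0 + x * ev (fun k => g (k+1)) x := by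
  unfold ev
  rw [(ev_summable hg x).tsum_eq_zero_add, ← tsum_mul_left]
  congr 1
  · simp
  · congr 1; ext k; ring

lemma tendsto_shift {g : ℕ → ℚ_[p]} (hg : Tendsto g atTop (𝓝 0)) (i : ℕ) :
    Tendsto (fun k => g (k + i)) atTop (𝓝 0) := (tendsto_add_atTop_iff_nat i).2 hg

/-- tail evaluations -/
noncomputable def tl (g : ℕ → ℚ_[p]) (z : ℤ_[p]) (i : ℕ) : ℚ_[p] := ev (fun k => g (k + i)) z

lemma tl_step {g : ℕ → ℚ_[p]} (hg : Tendsto g atTop (𝓝 0)) (z : ℤ_[p]) (i : ℕ) :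
    tl g z i = g i + z * tl g z (i+1) := by
  unfold tl
  rw [ev_step (tendsto_shift hg i)]
  simp only [zero_add]
  congr 3
  funext k; congr 1; ring

lemma tl_tendsto {g : ℕ → ℚ_[p]} (hg : Tendsto g atTop (𝓝 0)) (z : ℤ_[p]) :
    Tendsto (tl g z) atTop (𝓝 0) := by
  rw [NormedAddCommGroup.tendsto_atTop] at hg ⊢
  intro ε hε
  obtain ⟨N, hN⟩ := hg (ε/2) (by positivity)
  refine ⟨N, fun i hi => ?_⟩
  rw [sub_zero]
  refine lt_of_le_of_lt (ev_norm_le _ _ (ε/2) fun k => ?_) (by linarith)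
  have := hN (k + i) (by omega)
  rw [sub_zero] at this; exact this.le

noncomputable def dq (g : ℕ → ℚ_[p]) (z : ℤ_[p]) (i : ℕ) : ℚ_[p] := tl g z (i+1)

lemma dq_tendsto {g : ℕ → ℚ_[p]} (hg : Tendsto g atTop (𝓝 0)) (z : ℤ_[p]) :
    Tendsto (dq g z) atTop (𝓝 0) := (tendsto_add_atTop_iff_nat 1).2 (tl_tendsto hg z)

lemma tsum_sub' {a b : ℕ → ℚ_[p]} (ha : Summable a) (hb : Summable b) :
    ∑' k, (a k - b k) = ∑' k, a k - ∑' k, b k := ha.tsum_sub hb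

lemma ev_dq {g : ℕ → ℚ_[p]} (hg : Tendsto g atTop (𝓝 0)) (z x : ℤ_[p]) :
    ev g x = ev g z + ((x : ℚ_[p]) - z) * ev (dq g z) x := by
  have hE := tl_tendsto hg z
  have hD := dq_tendsto hg z
  have h0 : ev g z = tl g z 0 := rfl
  have hg' : ∀ k, g k = tl g z k - z * dq g z k := by
    intro k; rw [tl_step hg z k]; unfold dq; ring
  have h1 : ev g x = ev (tl g z) x - z * ev (dq g z) x := by
    unfold ev
    rw [← tsum_mul_left, ← tsum_sub' (ev_summable hE x) ((ev_summable hD x).mul_left _)]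
    congr 1; funext k; rw [hg' k]; ring
  rw [h1, ev_step hE x, h0]
  have : (fun k => tl g z (k+1)) = dq g z := rfl
  rw [this]; ring

structure Top (g : ℕ → ℚ_[p]) (j : ℕ) : Prop where
  nz : g j ≠ 0
  le : ∀ i, ‖g i‖ ≤ ‖g j‖
  lt : ∀ i, j < i → ‖g i‖ < ‖g j‖

lemma norm_le_div_of_lt {a b : ℚ_[p]} (h : ‖a‖ < ‖b‖) : ‖a‖ ≤ ‖b‖ / p := by
  have hb : b ≠ 0 := by
    intro h0; rw [h0, norm_zero] at h; exact absurd h (not_lt.2 (norm_nonneg _))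
  have hp := p_pos_real p
  rw [Padic.norm_eq_zpow_neg_valuation hb, Padic.norm_lt_pow_iff_norm_le_pow_sub_one] at h
  rw [Padic.norm_eq_zpow_neg_valuation hb]
  rwa [zpow_sub_one₀ hp.ne'] at h

lemma norm_tl_lt {g : ℕ → ℚ_[p]} {j : ℕ} (ht : Top g j) (z : ℤ_[p]) (i : ℕ) (hi : j < i) :
    ‖tl g z i‖ < ‖g j‖ := by
  have hj : 0 < ‖g j‖ := norm_pos_iff.2 ht.nz
  refine lt_of_le_of_lt (ev_norm_le _ _ (‖g j‖ / p) fun k => norm_le_div_of_lt (ht.lt _ (by omega))) ?_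
  exact div_lt_self hj (one_lt_p_real p)

lemma norm_add_eq_left {a b : ℚ_[p]} (h : ‖b‖ < ‖a‖) : ‖a + b‖ = ‖a‖ := by
  rw [IsUltrametricDist.norm_add_eq_max_of_norm_ne_norm h.ne', max_eq_left h.le]

lemma norm_tl_top {g : ℕ → ℚ_[p]} {j : ℕ} (hg : Tendsto g atTop (𝓝 0)) (ht : Top g j) (z : ℤ_[p]) :
    ‖tl g z j‖ = ‖g j‖ := by
  rw [tl_step hg, norm_add_eq_left]
  rw [norm_mul]
  refine lt_of_le_of_lt (mul_le_of_le_one_left (norm_nonneg _) z.2) (norm_tl_lt ht z _ (by omega))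

lemma Top.dq {g : ℕ → ℚ_[p]} {j : ℕ} (hg : Tendsto g atTop (𝓝 0)) (ht : Top g (j+1)) (z : ℤ_[p]) :
    Top (dq g z) j := by
  have h1 : ‖PadicDioph.dq g z j‖ = ‖g (j+1)‖ := norm_tl_top hg ht z
  refine ⟨?_, fun i => ?_, fun i hi => ?_⟩
  · rw [← norm_ne_zero_iff, h1, norm_ne_zero_iff]; exact ht.nz
  · rw [h1]; exact ev_norm_le _ _ _ fun k => ht.le _
  · rw [h1]; exact norm_tl_lt ht z _ (by omega)

variable (ν : Measure ℤ_[p]) [ν.IsAddHaarMeasure]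

lemma good_top (j : ℕ) : ∀ (g : ℕ → ℚ_[p]), Tendsto g atTop (𝓝 0) → Top g j →
    ∀ (x0 : ℤ_[p]) (k : ℕ) (η ε : ℝ), 0 < η → 0 < ε → ε ≤ 1 → (∃ x ∈ bl x0 k, η ≤ ‖ev g x‖) →
    ν {x ∈ bl x0 k | ‖ev g x‖ < ε * η} ≤ ENNReal.ofReal (j * p * ε ^ ((1/2:ℝ)^j)) * ν (bl x0 k) := by
  induction j with
  | zero =>
    intro g hg ht x0 k η ε hη hε hε1 ⟨x', hx', hx'η⟩
    have hc : ∀ x, ‖ev g x‖ = ‖g 0‖ := fun x => norm_tl_top hg ht x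
    have : {x ∈ bl x0 k | ‖ev g x‖ < ε * η} = ∅ := by
      ext x
      simp only [Set.mem_setOf_eq, Set.mem_empty_iff_false, iff_false, not_and, not_lt]
      intro _
      rw [hc] at hx'η ⊢
      nlinarith
    rw [this]; simp
  | succ j ih =>
    intro g hg ht x0 k η ε hη hε hε1 ⟨x', hx', hx'η⟩
    have hp := p_pos_real p
    by_cases hS : {x ∈ bl x0 k | ‖ev g x‖ < ε * η} = ∅
    · rw [hS]; simp
    obtain ⟨z, hz, hzε⟩ := Set.nonempty_iff_ne_empty.2 hS
    set r : ℝ := (p:ℝ)^(-(k:ℤ)) with hr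
    have hr0 : 0 < r := by positivity
    set δ : ℝ := ε ^ (1/2 : ℝ) with hδ
    have hδ0 : 0 < δ := Real.rpow_pos_of_pos hε _
    have hδ1 : δ ≤ 1 := Real.rpow_le_one hε.le hε1 (by norm_num)
    have hδδ : δ * δ = ε := by
      rw [hδ, ← Real.rpow_add hε]; norm_num
    have hzb := bl_eq_of_mem hz
    have hh : η / r ≤ ‖ev (dq g z) x'‖ := by
      have h1 := ev_dq hg z x'
      have h2 : ‖ev g x'‖ = ‖((x' : ℚ_[p]) - z) * ev (dq g z) x'‖ := by
        have h3 : ‖ev g z‖ < ‖ev g x'‖ := by nlinarith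
        have : ((x' : ℚ_[p]) - z) * ev (dq g z) x' = ev g x' + (- ev g z) := by rw [h1]; ring
        rw [this, norm_add_eq_left (by rwa [norm_neg])]
      rw [hzb, mem_bl] at hx'
      have h4 : ‖(x' : ℚ_[p]) - z‖ ≤ r := hx'
      rw [div_le_iff₀ hr0]
      rw [h2, norm_mul] at hx'η
      calc η ≤ _ := hx'η
        _ ≤ r * ‖ev (dq g z) x'‖ := by gcongr
        _ = _ := mul_comm _ _
    have hsub : {x ∈ bl x0 k | ‖ev g x‖ < ε * η} ⊆ {x | ‖x - z‖ < δ * r} ∪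
        {x ∈ bl x0 k | ‖ev (dq g z) x‖ < δ * (η / r)} := by
      rintro x ⟨hx, hxε⟩
      by_cases hxz : ‖x - z‖ < δ * r
      · left; exact hxz
      · right
        refine ⟨hx, ?_⟩
        push Not at hxz
        have h1 : ((x : ℚ_[p]) - z) * ev (dq g z) x = ev g x + (- ev g z) := by
          rw [ev_dq hg z x]; ring
        have h2 : ‖((x : ℚ_[p]) - z) * ev (dq g z) x‖ < ε * η := by
          rw [h1]
          refine lt_of_le_of_lt (Padic.nonarchimedean _ _) (max_lt hxε ?_)
          rwa [norm_neg]
        rw [norm_mul] at h2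
        have h3 : ‖(x : ℚ_[p]) - z‖ = ‖x - z‖ := rfl
        rw [h3] at h2
        by_contra hc
        push Not at hc
        have h4 : (δ * r) * (δ * (η / r)) ≤ ‖x - z‖ * ‖ev (dq g z) x‖ := by gcongr
        have h5 : (δ * r) * (δ * (η / r)) = ε * η := by rw [← hδδ]; field_simp
        linarith
    refine (measure_mono hsub).trans ((measure_union_le _ _).trans ?_)
    have hA := meas_small_ball ν z k δ hδ0 hδ1
    have hB := ih (dq g z) (dq_tendsto hg z) (ht.dq hg z) x0 k (η / r) δ (by positivity) hδ0 hδ1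
      ⟨x', hx', hh⟩
    rw [← hzb] at hA
    refine (add_le_add hA hB).trans ?_
    rw [← add_mul, ← ENNReal.ofReal_add (by positivity) (by positivity)]
    gcongr
    have h6 : δ ^ ((1/2:ℝ)^j) = ε ^ ((1/2:ℝ)^(j+1)) := by
      rw [hδ, ← Real.rpow_mul hε.le, pow_succ']
    have h7 : δ ≤ ε ^ ((1/2:ℝ)^(j+1)) := by
      rw [hδ]
      apply Real.rpow_le_rpow_of_exponent_ge hε hε1
      rw [pow_succ]
      have : (1/2:ℝ)^j ≤ 1 := pow_le_one₀ (by norm_num) (by norm_num)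
      linarith
    rw [h6]
    push_cast
    nlinarith

end Ser
section Ser3
open Filter Topology
variable {p : ℕ} [Fact p.Prime]

lemma top_of_bound (g : ℕ → ℚ_[p]) (N k : ℕ) (hk : k ≤ N) (h : ∀ l, N < l → ‖g l‖ < ‖g k‖) :
    ∃ j, j ≤ N ∧ Top g j := by
  classical
  obtain ⟨i, hi, hmax⟩ := Finset.exists_max_image (Finset.range (N+1)) (fun l => ‖g l‖) ⟨k, by simp; omega⟩
  set S := (Finset.range (N+1)).filter (fun l => ‖g l‖ = ‖g i‖) with hS
  have hne : S.Nonempty := ⟨i, by simp [hS]; simpa using hi⟩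
  have hjS := Finset.max'_mem S hne
  set j := S.max' hne with hj
  rw [hS, Finset.mem_filter, Finset.mem_range] at hjS
  have hki : ‖g k‖ ≤ ‖g i‖ := hmax k (by simp; omega)
  refine ⟨j, by omega, ?_, ?_, ?_⟩
  · rw [← norm_pos_iff, hjS.2]
    have := h (N+1) (by omega)
    have := norm_nonneg (g (N+1))
    linarith
  · intro l
    rw [hjS.2]
    by_cases hl : l ≤ N
    · exact hmax l (by simp; omega)
    · exact (h l (by omega)).le.trans hki
  · intro l hl
    rw [hjS.2]
    by_cases hlN : l ≤ N
    · refine lt_of_le_of_ne (hmax l (by simp; omega)) fun he => ?_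
      have : l ∈ S := by rw [hS, Finset.mem_filter, Finset.mem_range]; exact ⟨by omega, he⟩
      have := Finset.le_max' S l this
      omega
    · exact (h l (by omega)).trans_le hki

lemma exists_top_LI {r : ℕ} (f : Fin r → ℕ → ℚ_[p]) (hf : ∀ i, Tendsto (f i) atTop (𝓝 0))
    (hli : LinearIndependent ℚ_[p] f) :
    ∃ N, ∀ c : Fin r → ℚ_[p], c ≠ 0 → ∃ j, j ≤ N ∧ Top (∑ i, c i • f i) j := by
  have hcomp : IsCompact (sphere (0 : Fin r → ℚ_[p]) 1) := isCompact_sphere _ _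
  let G : ℕ → (Fin r → ℚ_[p]) → ℚ_[p] := fun k c => (∑ i, c i • f i) k
  have hG : ∀ k, Continuous (G k) := by
    intro k
    simp only [G, Finset.sum_apply, Pi.smul_apply, smul_eq_mul]
    fun_prop
  let U : ℕ → Set (Fin r → ℚ_[p]) := fun s => ⋃ k ≤ s, {c | (1:ℝ)/(s+1) < ‖G k c‖}
  obtain ⟨s, hs⟩ := hcomp.elim_directed_cover U
    (fun s => isOpen_biUnion fun k _ => isOpen_lt continuous_const (hG k).norm)
    (by
      intro c hc
      have hc0 : c ≠ 0 := by
        intro h0; rw [h0] at hc; simp at hc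
      have h1 : (∑ i, c i • f i) ≠ 0 := by
        intro h0
        apply hc0
        funext i
        exact Fintype.linearIndependent_iff.1 hli c h0 i
      obtain ⟨k, hk⟩ := Function.ne_iff.1 h1
      have hk' : 0 < ‖G k c‖ := norm_pos_iff.2 hk
      obtain ⟨s, hs⟩ := exists_nat_one_div_lt hk'
      rw [Set.mem_iUnion]
      refine ⟨max k s, ?_⟩
      simp only [U, Set.mem_iUnion]
      refine ⟨k, le_max_left _ _, ?_⟩
      refine lt_of_le_of_lt ?_ hs
      apply one_div_le_one_div_of_le (by positivity)
      have : (s:ℝ) ≤ (max k s : ℕ) := by exact_mod_cast le_max_right _ _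
      linarith)
    (by
      apply Monotone.directed_le
      intro a b hab
      apply Set.iUnion_subset; intro k
      apply Set.iUnion_subset; intro hk
      intro c hc
      simp only [U, Set.mem_iUnion]
      refine ⟨k, hk.trans hab, ?_⟩
      have hc2 : (1:ℝ)/(a+1) < ‖G k c‖ := hc
      refine lt_of_le_of_lt ?_ hc2
      apply one_div_le_one_div_of_le (by positivity)
      have : (a:ℝ) ≤ b := by exact_mod_cast hab
      linarith)
  have hev : ∀ᶠ l in atTop, ∀ i, ‖f i l‖ < (1:ℝ)/(s+1) := by
    rw [eventually_all]
    intro i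
    have := (hf i).norm
    rw [norm_zero] at this
    exact this.eventually_lt_const (by positivity)
  obtain ⟨N0, hN0⟩ := eventually_atTop.1 hev
  refine ⟨max s N0, fun c hc => ?_⟩
  -- scale
  obtain ⟨i0, hi0⟩ : ∃ i0, ∀ i, ‖c i‖ ≤ ‖c i0‖ := by
    have hne : (Finset.univ : Finset (Fin r)).Nonempty := by
      obtain ⟨i, -⟩ := Function.ne_iff.1 hc
      exact ⟨i, Finset.mem_univ _⟩
    obtain ⟨i0, -, h⟩ := Finset.exists_max_image Finset.univ (fun i => ‖c i‖) hne
    exact ⟨i0, fun i => h i (Finset.mem_univ _)⟩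
  have hci0 : c i0 ≠ 0 := by
    intro h0
    apply hc; funext i
    have := hi0 i
    rw [h0, norm_zero] at this
    exact norm_le_zero_iff.1 this
  set c' : Fin r → ℚ_[p] := fun i => c i / c i0 with hc'
  have hc'le : ∀ i, ‖c' i‖ ≤ 1 := by
    intro i; rw [hc']; simp only [norm_div]
    exact div_le_one_of_le₀ (hi0 i) (norm_nonneg _)
  have hc's : c' ∈ sphere (0 : Fin r → ℚ_[p]) 1 := by
    rw [mem_sphere_zero_iff_norm]
    apply le_antisymm
    · exact (pi_norm_le_iff_of_nonneg zero_le_one).2 hc'le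
    · have := norm_le_pi_norm c' i0
      rw [hc'] at this
      simp only [div_self hci0, norm_one] at this
      exact this
  have hU := hs hc's
  simp only [U, Set.mem_iUnion] at hU
  obtain ⟨k, hk, hk'⟩ := hU
  have hgc : ∀ l, (∑ i, c i • f i) l = c i0 * G l c' := by
    intro l
    simp only [G, Finset.sum_apply, Pi.smul_apply, smul_eq_mul, Finset.mul_sum, hc']
    refine Finset.sum_congr rfl fun i _ => ?_
    field_simp
  apply top_of_bound _ _ k (hk.trans (le_max_left _ _))
  intro l hl
  rw [hgc, hgc, norm_mul, norm_mul]
  apply mul_lt_mul_of_pos_left _ (norm_pos_iff.2 hci0)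
  refine lt_of_le_of_lt ?_ hk'
  simp only [G, Finset.sum_apply, Pi.smul_apply, smul_eq_mul]
  refine IsUltrametricDist.norm_sum_le_of_forall_le_of_nonneg (by positivity) fun i _ => ?_
  rw [norm_mul]
  refine (mul_le_of_le_one_left (norm_nonneg _) (hc'le i)).trans ?_
  exact (hN0 l (by have := le_max_right s N0; omega) i).le

lemma exists_top {r : ℕ} (f : Fin r → ℕ → ℚ_[p]) (hf : ∀ i, Tendsto (f i) atTop (𝓝 0)) :
    ∃ N, ∀ c : Fin r → ℚ_[p], (∑ i, c i • f i) = 0 ∨ ∃ j, j ≤ N ∧ Top (∑ i, c i • f i) j := by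
  haveI : Module.Finite ℚ_[p] (Submodule.span ℚ_[p] (Set.range f)) :=
    Module.Finite.span_of_finite ℚ_[p] (Set.finite_range f)
  obtain ⟨g, hg, hspan, hli⟩ := Submodule.exists_fun_fin_finrank_span_eq ℚ_[p] (Set.range f)
  obtain ⟨N, hN⟩ := exists_top_LI g (fun i => by obtain ⟨k, hk⟩ := hg i; rw [← hk]; exact hf k) hli
  refine ⟨N, fun c => ?_⟩
  have hmem : (∑ i, c i • f i) ∈ Submodule.span ℚ_[p] (Set.range g) := by
    rw [hspan]
    exact Submodule.sum_mem _ fun i _ => Submodule.smul_mem _ _ (Submodule.subset_span ⟨i, rfl⟩)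
  rw [Submodule.mem_span_range_iff_exists_fun] at hmem
  obtain ⟨c', hc'⟩ := hmem
  rw [← hc']
  by_cases h0 : c' = 0
  · left; simp [h0]
  · right; exact hN c' h0

lemma tendsto_comb {r : ℕ} (f : Fin r → ℕ → ℚ_[p]) (hf : ∀ i, Tendsto (f i) atTop (𝓝 0))
    (c : Fin r → ℚ_[p]) : Tendsto (∑ i, c i • f i) atTop (𝓝 0) := by
  have h1 : Tendsto (fun k => ∑ i, c i * f i k) atTop (𝓝 (∑ i : Fin r, c i * 0)) :=
    tendsto_finsetSum _ fun i _ => (hf i).const_mul _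
  simp only [mul_zero, Finset.sum_const_zero] at h1
  refine h1.congr fun k => ?_
  simp

lemma ev_comb {r : ℕ} (f : Fin r → ℕ → ℚ_[p]) (hf : ∀ i, Tendsto (f i) atTop (𝓝 0))
    (c : Fin r → ℚ_[p]) (x : ℤ_[p]) : ev (∑ i, c i • f i) x = ∑ i, c i * ev (f i) x := by
  unfold ev
  simp_rw [← tsum_mul_left]
  rw [← Summable.tsum_finsetSum (fun i _ => (ev_summable (hf i) x).mul_left _)]
  congr 1
  funext k
  simp [Finset.sum_mul, mul_assoc]

lemma good_uniform (ν : Measure ℤ_[p]) [ν.IsAddHaarMeasure] {r : ℕ} (f : Fin r → ℕ → ℚ_[p])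
    (hf : ∀ i, Tendsto (f i) atTop (𝓝 0)) :
    ∃ C a : ℝ, 0 < C ∧ 0 < a ∧ ∀ c : Fin r → ℚ_[p],
    ∀ (x0 : ℤ_[p]) (k : ℕ) (η ε : ℝ), 0 < η → 0 < ε → ε ≤ 1 →
      (∃ x ∈ bl x0 k, η ≤ ‖∑ i, c i * ev (f i) x‖) →
    ν {x ∈ bl x0 k | ‖∑ i, c i * ev (f i) x‖ < ε * η} ≤ ENNReal.ofReal (C * ε ^ a) * ν (bl x0 k) := by
  obtain ⟨N, hN⟩ := exists_top f hf
  have hp := p_pos_real p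
  refine ⟨(N+1) * p, (1/2:ℝ)^N, by positivity, by positivity, ?_⟩
  intro c x0 k η ε hη hε hε1 hx
  simp_rw [← ev_comb f hf c] at hx ⊢
  rcases hN c with h0 | ⟨j, hj, ht⟩
  · exfalso
    obtain ⟨x, -, hx⟩ := hx
    rw [h0] at hx
    simp [ev] at hx; linarith
  · refine (good_top ν j _ (tendsto_comb f hf c) ht x0 k η ε hη hε hε1 hx).trans ?_
    gcongr ENNReal.ofReal ?_ * _
    have h1 : (j:ℝ) ≤ N + 1 := by
      have : (j:ℝ) ≤ N := by exact_mod_cast hj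
      linarith
    have h2 : ε ^ ((1/2:ℝ)^j) ≤ ε ^ ((1/2:ℝ)^N) :=
      Real.rpow_le_rpow_of_exponent_ge hε hε1 (pow_le_pow_of_le_one (by norm_num) (by norm_num) hj)
    gcongr

lemma ev_continuous (g : ℕ → ℚ_[p]) (hg : Tendsto g atTop (𝓝 0)) : Continuous (ev g) := by
  obtain ⟨c, hc⟩ : ∃ c, ∀ k, ‖g k‖ ≤ c := by
    obtain ⟨c, hc⟩ := (Metric.isBounded_range_of_tendsto g hg).exists_norm_le
    exact ⟨c, fun k => hc _ ⟨k, rfl⟩⟩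
  have h0 : 0 ≤ c := (norm_nonneg _).trans (hc 0)
  have : LipschitzWith (Real.toNNReal c) (ev g) := by
    apply LipschitzWith.of_dist_le_mul
    intro x z
    rw [dist_eq_norm, ev_dq hg z x, add_sub_cancel_left, norm_mul, Real.coe_toNNReal _ h0, mul_comm]
    have h1 : ‖ev (dq g z) x‖ ≤ c := ev_norm_le _ _ _ fun k => ev_norm_le _ _ _ fun l => hc _
    have h2 : ‖(x : ℚ_[p]) - z‖ = dist x z := rfl
    rw [h2]; gcongr
  exact this.continuous

end Ser3
section Nondiv
open Filter Topology
variable {p : ℕ} [Fact p.Prime]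

noncomputable def Kc (p : ℕ) : ℕ → ℝ≥0∞
  | 0 => 0
  | l+1 => p * (1 + Kc p l)

lemma Kc_ne_top (p l : ℕ) : Kc p l ≠ ∞ := by
  induction l with
  | zero => simp [Kc]
  | succ l ih => simp only [Kc]; finiteness

lemma exists_bl_subset {U : Set ℤ_[p]} (hU : IsOpen U) {x : ℤ_[p]} (hx : x ∈ U) :
    ∃ k, bl x k ⊆ U := by
  obtain ⟨r, hr, hrU⟩ := Metric.isOpen_iff.1 hU x hx
  obtain ⟨k, hk⟩ := PadicInt.exists_pow_neg_lt p hr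
  exact ⟨k, (closedBall_subset_ball hk).trans hrU⟩

def Comp {S : Type*} [PartialOrder S] (F : Finset S) (s : S) : Prop :=
  s ∉ F ∧ ∀ t ∈ F, s ≤ t ∨ t ≤ s

lemma nondiv_step (ν : Measure ℤ_[p]) [ν.IsAddHaarMeasure] {S : Type*} [PartialOrder S]
    (φ : S → ℤ_[p] → ℝ) (κ : ℝ≥0∞) (ε : ℝ) (Bad : Set ℤ_[p]) (m : ℕ)
    (good : ∀ s x0 k, (∃ x ∈ bl x0 k, 1 ≤ φ s x) →
      ν {x ∈ bl x0 k | φ s x < ε} ≤ κ * ν (bl x0 k))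
    (hopen : ∀ s, IsOpen {x | φ s x < 1})
    (fin : ∀ x, ∀ F : Finset S, IsChain (· ≤ ·) (F : Set S) → (∀ s ∈ F, ε ≤ φ s x ∧ φ s x ≤ 1) →
      (∀ s, Comp F s → 1 ≤ φ s x) → x ∉ Bad)
    (card : ∀ F : Finset S, IsChain (· ≤ ·) (F : Set S) → F.card ≤ m) (l : ℕ) :
    ∀ F : Finset S, IsChain (· ≤ ·) (F : Set S) → F.card + l = m → ∀ x0 k,
      (∀ s, Comp F s → ∃ x ∈ bl x0 k, 1 ≤ φ s x) →
      ν {x ∈ bl x0 k | x ∈ Bad ∧ ∀ s ∈ F, ε ≤ φ s x ∧ φ s x ≤ 1} ≤ Kc p l * κ * ν (bl x0 k) := by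
  classical
  have hins : ∀ F : Finset S, IsChain (· ≤ ·) (F : Set S) → ∀ s, Comp F s →
      IsChain (· ≤ ·) ((insert s F : Finset S) : Set S) := by
    intro F hF s hs
    rw [Finset.coe_insert]
    exact hF.insert fun t ht _ => hs.2 t ht
  induction l with
  | zero =>
    intro F hF hcard x0 k _
    have : {x ∈ bl x0 k | x ∈ Bad ∧ ∀ s ∈ F, ε ≤ φ s x ∧ φ s x ≤ 1} = ∅ := by
      rw [Set.eq_empty_iff_forall_notMem]
      rintro x ⟨-, hxB, hxF⟩
      refine fin x F hF hxF (fun s hs => ?_) hxB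
      have := card _ (hins F hF s hs)
      rw [Finset.card_insert_of_notMem hs.1] at this
      omega
    rw [this]; simp
  | succ l ih =>
    intro F hF hcard x0 k hsup
    set A := {x ∈ bl x0 k | x ∈ Bad ∧ ∀ s ∈ F, ε ≤ φ s x ∧ φ s x ≤ 1} with hA
    let P : ℤ_[p] → ℕ → Prop := fun x k' => ∃ s, Comp F s ∧ ∀ y ∈ bl x k', φ s y < 1
    have hex : ∀ x ∈ A, ∃ k', P x k' := by
      rintro x ⟨-, hxB, hxF⟩
      by_contra hc
      refine fin x F hF hxF (fun s hs => ?_) hxB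
      by_contra hlt
      push Not at hlt
      obtain ⟨k', hk'⟩ := exists_bl_subset (hopen s) (x := x) hlt
      exact hc ⟨k', s, hs, fun y hy => hk' hy⟩
    let kk : ℤ_[p] → ℕ := fun x => if h : ∃ k', P x k' then Nat.find h else 0
    have hkk : ∀ x ∈ A, P x (kk x) := by
      intro x hx
      simp only [kk, dif_pos (hex x hx)]
      exact Nat.find_spec (hex x hx)
    have hkmin : ∀ x ∈ A, ∀ k', P x k' → kk x ≤ k' := by
      intro x hx k' h
      simp only [kk, dif_pos (hex x hx)]
      exact Nat.find_min' _ h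
    have hPball : ∀ x y k', y ∈ bl x k' → P x k' → P y k' := by
      intro x y k' hy h
      simp only [P] at h ⊢
      rwa [← bl_eq_of_mem hy]
    have hkgt : ∀ x ∈ A, k < kk x := by
      intro x hx
      by_contra hle
      push Not at hle
      obtain ⟨s, hs, hs1⟩ := hkk x hx
      obtain ⟨y, hy, hy1⟩ := hsup s hs
      rw [bl_eq_of_mem hx.1] at hy
      exact absurd (hs1 y (bl_anti x hle hy)) (not_lt.2 hy1)
    have hle : ∀ x ∈ A, ∀ y ∈ A, (bl x (kk x) ∩ bl y (kk y)).Nonempty → kk x ≤ kk y := by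
      intro x hx y hy ⟨w, hwx, hwy⟩
      by_contra hlt
      push Not at hlt
      have h1 : P w (kk y) := hPball y w _ hwy (hkk y hy)
      have h2 : w ∈ bl x (kk y) := bl_anti x hlt.le hwx
      have h3 : x ∈ bl w (kk y) := by rw [← bl_eq_of_mem h2]; exact self_mem_bl _ _
      have := hkmin x hx _ (hPball w x _ h3 h1)
      omega
    set D : Set (Set ℤ_[p]) := (fun x => bl x (kk x)) '' A with hD
    have hdisj : D.PairwiseDisjoint id := by
      rintro _ ⟨x, hx, rfl⟩ _ ⟨y, hy, rfl⟩ hne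
      rw [Function.onFun, Set.disjoint_iff_inter_eq_empty]
      by_contra hc
      rw [← Ne, ← Set.nonempty_iff_ne_empty] at hc
      apply hne
      have he : kk x = kk y := le_antisymm (hle x hx y hy hc) (hle y hy x hx (by rwa [Set.inter_comm]))
      obtain ⟨w, hwx, hwy⟩ := hc
      simp only [id] at hwx hwy ⊢
      rw [bl_eq_of_mem hwx, bl_eq_of_mem hwy, he]
    have hDo : ∀ b ∈ D, IsOpen b := by
      rintro _ ⟨x, hx, rfl⟩; exact isOpen_bl _ _
    have hDc : D.Countable := by
      refine hdisj.countable_of_isOpen hDo ?_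
      rintro _ ⟨x, hx, rfl⟩; exact ⟨x, self_mem_bl _ _⟩
    have hAD : A ⊆ ⋃ b ∈ D, A ∩ b := by
      intro x hx
      simp only [Set.mem_iUnion]
      exact ⟨_, ⟨x, hx, rfl⟩, hx, self_mem_bl _ _⟩
    have hDB : (⋃ b ∈ D, b) ⊆ bl x0 k := by
      apply Set.iUnion₂_subset
      rintro _ ⟨x, hx, rfl⟩
      rw [bl_eq_of_mem hx.1]
      exact bl_anti x (hkgt x hx).le
    have hloc : ∀ b ∈ D, ν (A ∩ b) ≤ (Kc p (l+1) * κ) * ν b := by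
      rintro _ ⟨x, hx, rfl⟩
      obtain ⟨s, hs, hs1⟩ := hkk x hx
      obtain ⟨k', hk'⟩ : ∃ k', kk x = k' + 1 := ⟨kk x - 1, by have := hkgt x hx; omega⟩
      have hsup' : ∀ s, Comp F s → ∃ y ∈ bl x k', 1 ≤ φ s y := by
        intro s hs
        by_contra hc
        push Not at hc
        have := hkmin x hx k' ⟨s, hs, hc⟩
        omega
      have hsub : A ∩ bl x (kk x) ⊆ {y ∈ bl x k' | φ s y < ε} ∪
          {y ∈ bl x k' | y ∈ Bad ∧ ∀ s' ∈ (insert s F : Finset S), ε ≤ φ s' y ∧ φ s' y ≤ 1} := by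
        rintro y ⟨⟨-, hyB, hyF⟩, hyb⟩
        have hyb' : y ∈ bl x k' := bl_anti x (by omega) hyb
        by_cases hy : φ s y < ε
        · left; exact ⟨hyb', hy⟩
        · right
          refine ⟨hyb', hyB, fun s' hs' => ?_⟩
          rcases Finset.mem_insert.1 hs' with rfl | h
          · exact ⟨not_lt.1 hy, (hs1 y hyb).le⟩
          · exact hyF s' h
      refine (measure_mono hsub).trans ((measure_union_le _ _).trans ?_)
      have h1 := good s x k' (hsup' s hs)
      have h2 := ih (insert s F) (hins F hF s hs)
        (by rw [Finset.card_insert_of_notMem hs.1]; omega) x k'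
        (fun s' hs' => hsup' s' ⟨fun h => hs'.1 (Finset.mem_insert_of_mem h),
          fun t ht => hs'.2 t (Finset.mem_insert_of_mem ht)⟩)
      refine (add_le_add h1 h2).trans ?_
      simp only [hk', Kc]
      rw [meas_bl_succ ν x k']
      apply le_of_eq
      ring
    calc ν A ≤ ν (⋃ b ∈ D, A ∩ b) := measure_mono hAD
      _ ≤ ∑' b : D, ν (A ∩ b) := measure_biUnion_le ν hDc _
      _ ≤ ∑' b : D, (Kc p (l+1) * κ) * ν b := ENNReal.tsum_le_tsum fun b => hloc b b.2
      _ = (Kc p (l+1) * κ) * ∑' b : D, ν b := ENNReal.tsum_mul_left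
      _ = (Kc p (l+1) * κ) * ν (⋃ b ∈ D, b) := by
          have := measure_biUnion (μ := ν) hDc hdisj (fun b hb => (hDo b hb).measurableSet)
          simp only [id] at this
          rw [this]
      _ ≤ _ := by gcongr

lemma nondiv (ν : Measure ℤ_[p]) [ν.IsAddHaarMeasure] {S : Type*} [PartialOrder S]
    (φ : S → ℤ_[p] → ℝ) (κ : ℝ≥0∞) (ε : ℝ) (Bad : Set ℤ_[p]) (m : ℕ)
    (good : ∀ s x0 k, (∃ x ∈ bl x0 k, 1 ≤ φ s x) →
      ν {x ∈ bl x0 k | φ s x < ε} ≤ κ * ν (bl x0 k))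
    (hopen : ∀ s, IsOpen {x | φ s x < 1})
    (fin : ∀ x, ∀ F : Finset S, IsChain (· ≤ ·) (F : Set S) → (∀ s ∈ F, ε ≤ φ s x ∧ φ s x ≤ 1) →
      (∀ s, Comp F s → 1 ≤ φ s x) → x ∉ Bad)
    (card : ∀ F : Finset S, IsChain (· ≤ ·) (F : Set S) → F.card ≤ m)
    (hsup : ∀ s, ∃ x, 1 ≤ φ s x) : ν Bad ≤ Kc p m * κ * ν Set.univ := by
  have h := nondiv_step ν φ κ ε Bad m good hopen fin card m ∅ (by simp) (by simp) 0 0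
    (fun s _ => by obtain ⟨x, hx⟩ := hsup s; exact ⟨x, by rw [bl_zero]; trivial, hx⟩)
  simpa [bl_zero] using h

end Nondiv
section Nondiv2
open Filter Topology
variable {p : ℕ} [Fact p.Prime]

noncomputable def Bs {m : ℕ} (V : Submodule ℚ (Fin m → ℚ)) : Matrix (Fin (Module.finrank ℚ V)) (Fin m) ℤ :=
  (exists_isB V).choose

lemma Bs_spec {m : ℕ} (V : Submodule ℚ (Fin m → ℚ)) : IsB V (Bs V) := (exists_isB V).choose_spec

noncomputable def Phi {m : ℕ} (t : ℕ) (ρ : ℝ) (Y : Fin m → ℚ_[p]) (V : Submodule ℚ (Fin m → ℚ)) : ℝ :=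
  psi t Y (Bs V) / ρ ^ (Module.finrank ℚ V)

lemma psi_bot {j m : ℕ} (t : ℕ) (Y : Fin m → ℚ_[p]) (B : Matrix (Fin j) (Fin m) ℤ) (hj : j = 0) :
    psi t Y B = 1 := by
  subst hj
  simp [psi, idx, wedge, Finset.univ_unique]

lemma Phi_bot {m : ℕ} (t : ℕ) (ρ : ℝ) (Y : Fin m → ℚ_[p]) : Phi t ρ Y (⊥ : Submodule ℚ (Fin m → ℚ)) = 1 := by
  unfold Phi
  rw [psi_bot _ _ _ (by simp)]
  simp

lemma one_le_idx {j m : ℕ} (t : ℕ) (Y : Fin m → ℚ_[p]) (B : Matrix (Fin j) (Fin m) ℤ) :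
    (1:ℝ) ≤ idx t Y B := by exact_mod_cast (le_max_left (1:ℝ≥0) _)

lemma le_idx {j m : ℕ} (t : ℕ) (Y : Fin m → ℚ_[p]) (B : Matrix (Fin j) (Fin m) ℤ) (i : Fin j) :
    (p:ℝ)^t * ‖ell Y (B i)‖ ≤ idx t Y B := by
  have h1 : ‖ell Y (B i)‖₊ ≤ Finset.univ.sup fun i => ‖ell Y (B i)‖₊ :=
    Finset.le_sup (f := fun i => ‖ell Y (B i)‖₊) (Finset.mem_univ i)
  have h2 : (p:ℝ≥0)^t * ‖ell Y (B i)‖₊ ≤ idx t Y B :=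
    (mul_le_mul_right h1 _).trans (le_max_right _ _)
  exact_mod_cast h2

lemma idx_cases {j m : ℕ} (t : ℕ) (Y : Fin m → ℚ_[p]) (B : Matrix (Fin j) (Fin m) ℤ) :
    (idx t Y B : ℝ) = 1 ∨ ∃ i, (idx t Y B : ℝ) = (p:ℝ)^t * ‖ell Y (B i)‖ := by
  rcases Nat.eq_zero_or_pos j with rfl | hj
  · left; simp [idx]
  · have hne : (Finset.univ : Finset (Fin j)).Nonempty := ⟨⟨0, hj⟩, Finset.mem_univ _⟩
    obtain ⟨i0, -, hi0⟩ := Finset.exists_mem_eq_sup Finset.univ hne (fun i => ‖ell Y (B i)‖₊)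
    unfold idx
    rw [hi0]
    rcases max_choice (1:ℝ≥0) ((p:ℝ≥0)^t * ‖ell Y (B i0)‖₊) with h | h
    · left; rw [h]; rfl
    · right; refine ⟨i0, ?_⟩; rw [h]; push_cast; rfl

lemma Phi_finish {m : ℕ} (t : ℕ) (ρ ε : ℝ) (hρ : 0 < ρ) (hε : 0 < ε) (hε1 : ε ≤ 1) (Y : Fin m → ℚ_[p])
    (F : Finset {V : Submodule ℚ (Fin m → ℚ) // V ≠ ⊥})
    (hF : IsChain (· ≤ ·) (F : Set {V : Submodule ℚ (Fin m → ℚ) // V ≠ ⊥}))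
    (h1 : ∀ s ∈ F, ε ≤ Phi t ρ Y s.1 ∧ Phi t ρ Y s.1 ≤ 1)
    (h2 : ∀ s, Comp F s → 1 ≤ Phi t ρ Y s.1)
    (w : Fin m → ℤ) (hw : w ≠ 0) (hwt : (p:ℝ)^t * ‖ell Y w‖ ≤ 1) : ∃ i, ε * ρ ≤ m * |(w i : ℝ)| := by
  classical
  have hw0 : toQL m w ≠ 0 := by
    intro h; exact hw (toQL_inj m (by rw [h, map_zero]))
  set G : Finset (Submodule ℚ (Fin m → ℚ)) := (insert ⊥ (F.image Subtype.val)).filter (fun V => toQL m w ∉ V) with hG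
  have hbot : ⊥ ∈ G := by
    simp [hG, hw0]
  obtain ⟨V, hV, hmax⟩ := Finset.exists_max_image G (fun V => Module.finrank ℚ V) ⟨⊥, hbot⟩
  rw [hG, Finset.mem_filter] at hV
  have hVle : Phi t ρ Y V ≤ 1 := by
    rcases Finset.mem_insert.1 hV.1 with h | h
    · rw [h, Phi_bot]
    · obtain ⟨s, hs, rfl⟩ := Finset.mem_image.1 h
      exact (h1 s hs).2
  have hcomp : ∀ s ∈ F, V ≤ s.1 ∨ s.1 ≤ V := by
    intro s hs
    rcases Finset.mem_insert.1 hV.1 with h | h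
    · left; rw [h]; exact bot_le
    · obtain ⟨s', hs', rfl⟩ := Finset.mem_image.1 h
      exact hF.total hs' hs
  set V' := V ⊔ Submodule.span ℚ {toQL m w} with hV'
  have hwV' : toQL m w ∈ V' := Submodule.mem_sup_right (Submodule.mem_span_singleton_self _)
  have hV'0 : V' ≠ ⊥ := by
    intro h; rw [h] at hwV'; exact hw0 (by simpa using hwV')
  have hV'c : ∀ s ∈ F, V' ≤ s.1 ∨ s.1 ≤ V' := by
    intro s hs
    by_cases hws : toQL m w ∈ s.1
    · left
      rcases hcomp s hs with h | h
      · rw [hV', sup_le_iff, Submodule.span_le]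
        exact ⟨h, by simpa using hws⟩
      · exact absurd (h hws) hV.2
    · right
      refine le_trans ?_ le_sup_left
      rcases hcomp s hs with h | h
      · have hsG : s.1 ∈ G := by
          rw [hG, Finset.mem_filter]
          exact ⟨Finset.mem_insert_of_mem (Finset.mem_image_of_mem _ hs), hws⟩
        rw [Submodule.eq_of_le_of_finrank_le h (hmax _ hsG)]
      · exact h
  have hεV' : ε ≤ Phi t ρ Y V' := by
    by_cases hm : (⟨V', hV'0⟩ : {V : Submodule ℚ (Fin m → ℚ) // V ≠ ⊥}) ∈ F
    · exact (h1 _ hm).1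
    · exact hε1.trans (h2 ⟨V', hV'0⟩ ⟨hm, fun t ht => hV'c t ht⟩)
  have hne : (Finset.univ : Finset (Fin m)).Nonempty := by
    obtain ⟨i, -⟩ := Function.ne_iff.1 hw; exact ⟨i, Finset.mem_univ _⟩
  obtain ⟨i0, -, hi0⟩ := Finset.exists_max_image Finset.univ (fun i => (w i).natAbs) hne
  refine ⟨i0, ?_⟩
  have hA := psi_A t Y V w hV.2 (Bs V) (Bs V') (Bs_spec V) (Bs_spec V') hwt (w i0).natAbs
    (fun i => hi0 i (Finset.mem_univ _))
  have hrank : Module.finrank ℚ V' = Module.finrank ℚ V + 1 := Submodule.finrank_sup_span_singleton hV.2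
  have hrm : Module.finrank ℚ V + 1 ≤ m := by
    rw [← hrank]
    have := Submodule.finrank_le V'
    simpa using this
  have hrm' : (Module.finrank ℚ V : ℝ) + 1 ≤ m := by exact_mod_cast hrm
  unfold Phi at hVle hεV'
  rw [div_le_one (by positivity)] at hVle
  rw [le_div_iff₀ (by positivity)] at hεV'
  have hpw : ρ ^ Module.finrank ℚ V' = ρ ^ Module.finrank ℚ V * ρ := by rw [hrank, pow_succ]
  have habs : (((w i0).natAbs : ℕ) : ℝ) = |(w i0 : ℝ)| := by
    rw [Nat.cast_natAbs]; push_cast; rfl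
  rw [habs] at hA
  set r := Module.finrank ℚ V
  have h3 : ρ ^ r * (ε * ρ) ≤ ρ ^ r * (m * |(w i0 : ℝ)|) := by
    calc ρ ^ r * (ε * ρ) = ε * (ρ^r * ρ) := by ring
      _ = ε * ρ ^ Module.finrank ℚ V' := by rw [hpw]
      _ ≤ _ := hεV'
      _ ≤ _ := hA
      _ ≤ (m:ℝ) * |(w i0 : ℝ)| * ρ^r := by
        have hps : 0 ≤ psi t Y (Bs V) := by unfold psi; positivity
        gcongr
      _ = _ := by ring
  exact le_of_mul_le_mul_left h3 (by positivity)

lemma Phi_continuous {m : ℕ} (t : ℕ) (ρ : ℝ) (Y : ℤ_[p] → Fin m → ℚ_[p]) (hY : Continuous Y)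
    (V : Submodule ℚ (Fin m → ℚ)) : Continuous fun x => Phi t ρ (Y x) V := by
  unfold Phi psi idx ell
  have : ∀ i, Continuous fun x => Y x i := fun i => (continuous_apply i).comp hY
  have h1 : Continuous fun x => Finset.univ.sup fun i => ‖∑ k, ((Bs V i k : ℤ) : ℚ_[p]) * Y x k‖₊ := by
    apply Continuous.finset_sup_apply
    intro i _
    fun_prop
  fun_prop

theorem nondiv_curve (ν : Measure ℤ_[p]) [ν.IsAddHaarMeasure] {m : ℕ} (hm : 0 < m)
    (f : Fin m → ℕ → ℚ_[p]) (hf : ∀ i, Tendsto (f i) atTop (𝓝 0)) :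
    ∃ (K : ℝ≥0∞) (a : ℝ), K ≠ ∞ ∧ 0 < a ∧ ∀ (t : ℕ) (R ε : ℝ), 0 < R → 0 < ε → ε ≤ 1 →
      (∀ z : Fin m → ℤ, z ≠ 0 → (p:ℝ)^t * ‖ell (fun i => ev (f i) 0) z‖ ≤ 1 → ∃ i, R ≤ |(z i : ℝ)|) →
      ν {x | ∃ z : Fin m → ℤ, z ≠ 0 ∧ (p:ℝ)^t * ‖ell (fun i => ev (f i) x) z‖ ≤ 1 ∧
        ∀ i, (m:ℝ)^2 * |(z i : ℝ)| < ε * R} ≤ K * ENNReal.ofReal (ε ^ a) := by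
  obtain ⟨C, a, hC, ha, hgood⟩ := good_uniform ν f hf
  have hmR : (0:ℝ) < m := by exact_mod_cast hm
  have : IsFiniteMeasure ν := inferInstance
  refine ⟨Kc p m * ENNReal.ofReal C * ν Set.univ, a, ?_, ha, ?_⟩
  · have := Kc_ne_top p m
    finiteness
  intro t R ε hR hε hε1 hR0
  set ρ := R / m with hρ
  have hρ0 : 0 < ρ := by positivity
  set Y : ℤ_[p] → Fin m → ℚ_[p] := fun x i => ev (f i) x with hY
  have hYc : Continuous Y := continuous_pi fun i => ev_continuous _ (hf i)
  have hp := p_pos_real p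
  have key := nondiv ν (S := {V : Submodule ℚ (Fin m → ℚ) // V ≠ ⊥})
    (fun s x => Phi t ρ (Y x) s.1) (ENNReal.ofReal (C * ε ^ a)) ε
    {x | ∃ z : Fin m → ℤ, z ≠ 0 ∧ (p:ℝ)^t * ‖ell (fun i => ev (f i) x) z‖ ≤ 1 ∧
        ∀ i, (m:ℝ)^2 * |(z i : ℝ)| < ε * R} m
    (by
      rintro ⟨V, hV⟩ x0 k ⟨x', hx', hx'1⟩
      simp only at hx'1 ⊢
      set c : ℝ := wedge (Bs V) / ρ ^ (Module.finrank ℚ V) with hc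
      have hw : (0:ℝ) < wedge (Bs V) := by
        exact_mod_cast Nat.pos_of_ne_zero (wedge_ne_zero _ (Bs_spec V).li)
      have hc0 : 0 < c := by positivity
      have hPhi : ∀ x, Phi t ρ (Y x) V = c * idx t (Y x) (Bs V) := by
        intro x; unfold Phi psi; rw [hc]; ring
      rw [hPhi] at hx'1
      simp_rw [hPhi]
      rcases idx_cases t (Y x') (Bs V) with h | ⟨i, hi⟩
      · rw [h, mul_one] at hx'1
        have : {x ∈ bl x0 k | c * (idx t (Y x) (Bs V) : ℝ) < ε} = ∅ := by
          rw [Set.eq_empty_iff_forall_notMem]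
          rintro x ⟨-, hx⟩
          have := one_le_idx t (Y x) (Bs V)
          nlinarith
        rw [this]; simp
      · rw [hi] at hx'1
        have h1 := hgood (fun k => ((Bs V i k : ℤ) : ℚ_[p])) x0 k (1 / (c * (p:ℝ)^t)) ε (by positivity) hε hε1
          ⟨x', hx', by
            rw [div_le_iff₀ (by positivity)]
            have : ell (Y x') (Bs V i) = ∑ k, ((Bs V i k : ℤ) : ℚ_[p]) * ev (f k) x' := rfl
            rw [this] at hx'1
            linarith⟩
        refine le_trans (measure_mono ?_) h1
        rintro x ⟨hx, hxε⟩
        refine ⟨hx, ?_⟩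
        have h2 := le_idx t (Y x) (Bs V) i
        have : ell (Y x) (Bs V i) = ∑ k, ((Bs V i k : ℤ) : ℚ_[p]) * ev (f k) x := rfl
        rw [this] at h2
        rw [mul_one_div, lt_div_iff₀ (by positivity)]
        have h3 := mul_le_mul_of_nonneg_left h2 hc0.le
        linarith)
    (by
      rintro ⟨V, hV⟩
      exact isOpen_lt (Phi_continuous t ρ Y hYc V) continuous_const)
    (by
      rintro x F hF h1 h2 ⟨z, hz, hzt, hzi⟩
      obtain ⟨i, hi⟩ := Phi_finish t ρ ε hρ0 hε hε1 (Y x) F hF h1 h2 z hz hzt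
      have h3 := hzi i
      rw [hρ, mul_div_assoc', div_le_iff₀ hmR] at hi
      nlinarith)
    (by
      intro F hF
      have : F.card ≤ (Finset.Icc 1 m).card := by
        apply Finset.card_le_card_of_injOn (fun s => Module.finrank ℚ s.1)
        · intro s _
          simp only [Finset.coe_Icc, Set.mem_Icc]
          refine ⟨?_, ?_⟩
          · rw [Nat.one_le_iff_ne_zero]
            intro h
            exact s.2 (Submodule.finrank_eq_zero.1 h)
          · have := Submodule.finrank_le s.1
            simpa using this
        · intro s hs s' hs' he
          simp only at he
          rcases hF.total hs hs' with h | h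
          · exact Subtype.ext (Submodule.eq_of_le_of_finrank_eq h he)
          · exact Subtype.ext (Submodule.eq_of_le_of_finrank_eq h he.symm).symm
      simpa using this)
    (by
      rintro ⟨V, hV⟩
      refine ⟨0, ?_⟩
      have hj : 0 < Module.finrank ℚ V := by
        rw [Nat.pos_iff_ne_zero]; intro h; exact hV (Submodule.finrank_eq_zero.1 h)
      have := psi_B t (Y 0) V (Bs V) (Bs_spec V) hj R hR hR0
      simp only [Phi]
      rwa [one_le_div (by positivity)])
  refine key.trans (le_of_eq ?_)
  rw [ENNReal.ofReal_mul hC.le]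
  ring

end Nondiv2
section Dio
variable {p : ℕ} [Fact p.Prime]

noncomputable def Yc {n : ℕ} (y : Fin n → ℚ_[p]) : Fin (n+1) → ℚ_[p] := Fin.cons 1 y

lemma ell_Yc {n : ℕ} (y : Fin n → ℚ_[p]) (z : Fin (n+1) → ℤ) :
    ell (Yc y) z = (∑ i, (z (Fin.succ i) : ℚ_[p]) * y i) + z 0 := by
  unfold ell Yc
  rw [Fin.sum_univ_succ]
  simp [add_comm]

def Apx {n : ℕ} (y : Fin n → ℚ_[p]) (u : ℝ) : Prop :=
  ∀ t0 : ℕ, ∃ t, t0 ≤ t ∧ ∃ z : Fin (n+1) → ℤ, z ≠ 0 ∧ (p:ℝ)^t * ‖ell (Yc y) z‖ ≤ 1 ∧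
    ∀ i, |(z i : ℝ)| < (p:ℝ)^((t:ℝ)/(u+1))

lemma le_supNormP {m : ℕ} (q : Fin m → ℚ) (i : Fin m) : ‖(q i : ℚ_[p])‖ ≤ supNormP p q :=
  le_ciSup (f := fun i => ‖(q i : ℚ_[p])‖) (Set.finite_range _).bddAbove i

lemma le_supNormR {m : ℕ} (q : Fin m → ℚ) (i : Fin m) : |(q i : ℝ)| ≤ supNormR q :=
  le_ciSup (f := fun i => |(q i : ℝ)|) (Set.finite_range _).bddAbove i

lemma exists_supNormP {m : ℕ} (q : Fin m → ℚ) (h : supNormP p q ≠ 0) :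
    ∃ i, supNormP p q = ‖(q i : ℚ_[p])‖ := by
  rcases isEmpty_or_nonempty (Fin m) with he | he
  · exact absurd (Real.iSup_of_isEmpty _) h
  · obtain ⟨i, hi⟩ := exists_eq_ciSup_of_finite (f := fun i => ‖(q i : ℚ_[p])‖)
    exact ⟨i, hi.symm⟩

lemma exists_supNormR {m : ℕ} (q : Fin (m+1) → ℚ) : ∃ i, supNormR q = |(q i : ℝ)| := by
  obtain ⟨i, hi⟩ := exists_eq_ciSup_of_finite (f := fun i => |(q i : ℝ)|)
  exact ⟨i, hi.symm⟩

lemma isZInvP_int (z : ℤ) : IsZInvP p (z : ℚ) := ⟨z, 0, by simp⟩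

lemma zinvp_int {q : ℚ} (hq : IsZInvP p q) (e : ℤ) (h : ‖(((p:ℚ)^e * q : ℚ) : ℚ_[p])‖ ≤ 1) :
    ∃ z : ℤ, (p:ℚ)^e * q = z := by
  have hp0 : (p:ℚ) ≠ 0 := by exact_mod_cast (Fact.out : p.Prime).ne_zero
  have hpp := p_pos_real p
  obtain ⟨z', k', hz'⟩ : ∃ (z' : ℤ) (k' : ℕ), (p:ℚ)^e * q = z' / (p:ℚ)^k' := by
    obtain ⟨z, k, rfl⟩ := hq
    obtain ⟨f, rfl | rfl⟩ := e.eq_nat_or_neg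
    · exact ⟨p^f * z, k, by push_cast; rw [zpow_natCast]; ring⟩
    · refine ⟨z, k + f, ?_⟩
      rw [zpow_neg, zpow_natCast, pow_add]; field_simp
  rw [hz'] at h ⊢
  have h1 : ‖(z' : ℚ_[p])‖ ≤ (p:ℝ)^(-(k':ℤ)) := by
    push_cast at h
    rw [norm_div, norm_pow, Padic.norm_p, inv_pow, div_inv_eq_mul] at h
    rw [zpow_neg, zpow_natCast, ← one_div, le_div_iff₀ (by positivity)]
    exact h
  rw [Padic.norm_int_le_pow_iff_dvd] at h1
  obtain ⟨c, hc⟩ := h1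
  refine ⟨c, ?_⟩
  rw [hc]; push_cast; field_simp

lemma exists_c {n : ℕ} (y : Fin n → ℚ_[p]) : ∃ c : ℕ, ∀ i, ‖y i‖ ≤ (p:ℝ)^c := by
  obtain ⟨c, hc⟩ := pow_unbounded_of_one_lt ‖y‖ (one_lt_p_real p)
  exact ⟨c, fun i => (norm_le_pi_norm y i).trans hc.le⟩

lemma norm_lin_le {n : ℕ} (y : Fin n → ℚ_[p]) (q : Fin n → ℚ) (c : ℕ) (hc : ∀ i, ‖y i‖ ≤ (p:ℝ)^c)
    (A : ℝ) (hA0 : 0 ≤ A) (hA : ∀ i, ‖(q i : ℚ_[p])‖ ≤ A) : ‖∑ i, (q i : ℚ_[p]) * y i‖ ≤ A * (p:ℝ)^c := by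
  have := p_pos_real p
  refine IsUltrametricDist.norm_sum_le_of_forall_le_of_nonneg (by positivity) fun i _ => ?_
  rw [norm_mul]
  have := hA i; have := hc i
  gcongr

lemma apx_of_wp {n : ℕ} (y : Fin n → ℚ_[p]) (v u : ℝ) (hu : 0 < u) (huv : u < v) (h : WpCond p y v) :
    Apx y u := by
  intro t0
  have hp := p_pos_real p
  have hp1 := one_lt_p_real p
  obtain ⟨c, hc⟩ := exists_c y
  have hβ : 0 < 1/(u+1) - 1/(v+1) := by
    rw [sub_pos]; apply one_div_lt_one_div_of_lt <;> linarith
  obtain ⟨t1, ht1⟩ := exists_nat_ge ((c + 1/(v+1)) / (1/(u+1) - 1/(v+1)))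
  set tt := max t0 t1 with htt
  obtain ⟨q0, q, hq0, hq, hT, hlin⟩ := h ((p:ℝ)^(tt))
  set Q := supNormP p q * supNormR (Fin.cons q0 q) with hQ
  have hpt1 : (1:ℝ) ≤ (p:ℝ)^tt := one_le_pow₀ hp1.le
  have hQ1 : 1 < Q := lt_of_le_of_lt hpt1 hT
  set Np := supNormP p q with hNp
  set Nr := supNormR (Fin.cons q0 q : Fin (n+1) → ℚ) with hNr
  have hNp0 : Np ≠ 0 := by intro h0; rw [hQ, h0, zero_mul] at hQ1; linarith
  obtain ⟨i1, hi1⟩ := exists_supNormP (p := p) q hNp0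
  rw [← hNp] at hi1
  have hqi1 : (q i1 : ℚ_[p]) ≠ 0 := by intro h0; rw [h0, norm_zero] at hi1; exact hNp0 hi1
  have hNpp : 0 < Np := by rw [hi1]; exact norm_pos_iff.2 hqi1
  have hNrp : 0 < Nr := by
    by_contra hc'
    push Not at hc'
    have : Q ≤ 0 := mul_nonpos_of_nonneg_of_nonpos hNpp.le hc'
    linarith
  set a : ℤ := - (q i1 : ℚ_[p]).valuation with ha
  have hNpa : Np = (p:ℝ)^a := by rw [hi1, Padic.norm_eq_zpow_neg_valuation hqi1]
  have hlin2 : Q ^ (-v) * Nr⁻¹ = Np * Q ^ (-(v+1)) := by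
    have : Nr = Q / Np := by rw [hQ]; field_simp
    rw [this, neg_add, Real.rpow_add (by linarith), Real.rpow_neg_one]
    field_simp
  rw [hlin2] at hlin
  have hpow1 : Q ^ (-(v+1)) ≤ 1 := Real.rpow_le_one_of_one_le_of_nonpos hQ1.le (by linarith)
  have hpc1 : (1:ℝ) ≤ (p:ℝ)^c := one_le_pow₀ hp1.le
  have hl1 : ‖∑ i, (q i : ℚ_[p]) * y i‖ ≤ Np * (p:ℝ)^c :=
    norm_lin_le y q c hc Np hNpp.le (fun i => le_supNormP q i)
  have hq0n : ‖(q0 : ℚ_[p])‖ ≤ Np * (p:ℝ)^c := by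
    have h1 : (q0 : ℚ_[p]) = ((∑ i, (q i : ℚ_[p]) * y i) + q0) + -(∑ i, (q i : ℚ_[p]) * y i) := by ring
    rw [h1]
    refine (Padic.nonarchimedean _ _).trans (max_le ?_ (by rwa [norm_neg]))
    refine hlin.le.trans ?_
    gcongr
    linarith
  have hqn : ∀ i, ‖(((Fin.cons q0 q : Fin (n+1) → ℚ) i : ℚ) : ℚ_[p])‖ ≤ Np * (p:ℝ)^c := by
    intro i
    refine Fin.cases ?_ (fun i => ?_) i
    · simpa using hq0n
    · simp only [Fin.cons_succ]
      refine (le_supNormP q i).trans ?_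
      exact le_mul_of_one_le_right hNpp.le hpc1
  have hqz : ∀ i, IsZInvP p ((Fin.cons q0 q : Fin (n+1) → ℚ) i) := by
    intro i
    refine Fin.cases ?_ (fun i => ?_) i
    · simpa using hq0
    · simpa using hq i
  have hnp : ‖(((p:ℚ)^(a + c) : ℚ) : ℚ_[p])‖ = (Np * (p:ℝ)^c)⁻¹ := by
    push_cast
    rw [Padic.norm_p_zpow, zpow_neg, zpow_add₀ hp.ne', zpow_natCast, hNpa]
  choose z hz using fun i => zinvp_int (hqz i) (a + c) (by
    rw [Rat.cast_mul, norm_mul, hnp, inv_mul_le_iff₀ (by positivity), mul_one]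
    exact hqn i)
  have hell : ell (Yc y) z = (((p:ℚ)^(a+c) : ℚ) : ℚ_[p]) * ((∑ i, (q i : ℚ_[p]) * y i) + q0) := by
    rw [ell_Yc, mul_add, Finset.mul_sum]
    congr 1
    · refine Finset.sum_congr rfl fun i _ => ?_
      have := hz i.succ
      simp only [Fin.cons_succ] at this
      have h2 : ((z i.succ : ℤ) : ℚ_[p]) = (((z i.succ : ℤ) : ℚ) : ℚ_[p]) := by push_cast; rfl
      rw [h2, ← this, Rat.cast_mul, mul_assoc]
    · have := hz 0
      simp only [Fin.cons_zero] at this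
      have h2 : ((z 0 : ℤ) : ℚ_[p]) = (((z 0 : ℤ) : ℚ) : ℚ_[p]) := by push_cast; rfl
      rw [h2, ← this, Rat.cast_mul]
  obtain ⟨t, htl, htu⟩ := exists_nat_pow_near (x := Q^(v+1)) (y := (p:ℝ))
    (Real.one_le_rpow hQ1.le (by linarith)) hp1
  have htt' : tt ≤ t := by
    by_contra hlt
    push Not at hlt
    have h1 : (p:ℝ)^(t+1) ≤ (p:ℝ)^tt := pow_le_pow_right₀ hp1.le hlt
    have h2 : Q ≤ Q^(v+1) := by
      conv_lhs => rw [← Real.rpow_one Q]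
      exact Real.rpow_le_rpow_of_exponent_le hQ1.le (by linarith)
    linarith
  refine ⟨t, (le_max_left _ _).trans htt', z, ?_, ?_, ?_⟩
  · intro h0
    have h1 := hz i1.succ
    rw [h0] at h1
    simp only [Fin.cons_succ, Pi.zero_apply, Int.cast_zero, mul_eq_zero] at h1
    rcases h1 with h1 | h1
    · exact zpow_ne_zero _ (by exact_mod_cast (Fact.out : p.Prime).ne_zero) h1
    · rw [h1] at hqi1; simp at hqi1
  · rw [hell, norm_mul, hnp]
    have h1 : (Np * (p:ℝ)^c)⁻¹ * ‖(∑ i, (q i : ℚ_[p]) * y i) + (q0 : ℚ_[p])‖ ≤ Q^(-(v+1)) := by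
      rw [inv_mul_le_iff₀ (by positivity)]
      refine hlin.le.trans ?_
      have : 0 ≤ Q^(-(v+1)) := by positivity
      rw [mul_assoc]
      gcongr
      exact le_mul_of_one_le_left this hpc1
    calc _ ≤ Q^(v+1) * Q^(-(v+1)) := by gcongr
      _ = 1 := by rw [← Real.rpow_add (by linarith)]; simp
  · intro i
    have hzi : |(z i : ℝ)| ≤ (p:ℝ)^c * Q := by
      have h1 : ((z i : ℤ) : ℝ) = (p:ℝ)^(a+c) * (((Fin.cons q0 q : Fin (n+1) → ℚ) i : ℚ) : ℝ) := by
        have := congrArg (fun x : ℚ => (x : ℝ)) (hz i)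
        push_cast at this
        exact this.symm
      rw [h1, abs_mul, abs_of_pos (by positivity), zpow_add₀ hp.ne', zpow_natCast, ← hNpa]
      have := le_supNormR (Fin.cons q0 q : Fin (n+1) → ℚ) i
      rw [← hNr] at this
      calc Np * (p:ℝ)^c * _ ≤ Np * (p:ℝ)^c * Nr := by gcongr
        _ = _ := by rw [hQ]; ring
    refine lt_of_le_of_lt hzi ?_
    have hQlt : Q < (p:ℝ)^(((t:ℝ)+1)/(v+1)) := by
      have h1 : Q = (Q^(v+1))^(1/(v+1)) := by
        rw [← Real.rpow_mul (by linarith), mul_one_div_cancel (by linarith), Real.rpow_one]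
      rw [h1]
      have h2 : (p:ℝ)^(((t:ℝ)+1)/(v+1)) = ((p:ℝ)^(t+1))^(1/(v+1)) := by
        rw [← Real.rpow_natCast, ← Real.rpow_mul hp.le]; push_cast; ring_nf
      rw [h2]
      apply Real.rpow_lt_rpow (by positivity) htu
      have : 0 < v + 1 := by linarith
      positivity
    calc (p:ℝ)^c * Q < (p:ℝ)^c * (p:ℝ)^(((t:ℝ)+1)/(v+1)) := by gcongr
      _ = (p:ℝ)^((c:ℝ) + ((t:ℝ)+1)/(v+1)) := by rw [Real.rpow_add hp, Real.rpow_natCast]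
      _ ≤ (p:ℝ)^((t:ℝ)/(u+1)) := by
        apply Real.rpow_le_rpow_of_exponent_le hp1.le
        have h1 : (t1:ℝ) ≤ t := by exact_mod_cast (le_max_right _ _).trans htt'
        have h2 := ht1.trans h1
        rw [div_le_iff₀ hβ] at h2
        have h3 : (t:ℝ) * (1/(u+1) - 1/(v+1)) = t/(u+1) - t/(v+1) := by ring
        rw [h3] at h2
        rw [add_div]
        linarith

end Dio
section Dio2
variable {p : ℕ} [Fact p.Prime]

lemma tail_cons {n : ℕ} (z : Fin (n+1) → ℤ) :
    (Fin.cons ((z 0 : ℤ) : ℚ) (fun i : Fin n => ((z i.succ : ℤ) : ℚ)) : Fin (n+1) → ℚ) =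
      fun i => (z i : ℚ) := by
  funext i
  refine Fin.cases ?_ (fun i => ?_) i <;> simp

lemma wp_case1 {n : ℕ} (y : Fin n → ℚ_[p]) (v : ℝ)
    (z : Fin (n+1) → ℤ) (hz : z ≠ 0) (h0 : ell (Yc y) z = 0) : WpCond p y v := by
  intro T
  have hp := p_pos_real p
  have hp1 := one_lt_p_real p
  obtain ⟨i, hi⟩ : ∃ i : Fin n, z i.succ ≠ 0 := by
    by_contra hcon
    push Not at hcon
    apply hz
    have h1 := ell_Yc y z
    rw [h0] at h1
    simp only [hcon, Int.cast_zero, zero_mul, Finset.sum_const_zero, zero_add] at h1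
    funext j
    refine Fin.cases ?_ (fun j => ?_) j
    · simpa using h1.symm
    · simpa using hcon j
  set A : ℝ := ‖(z i.succ : ℚ_[p])‖ with hA
  have hA0 : 0 < A := norm_pos_iff.2 (by exact_mod_cast hi)
  obtain ⟨K, hK⟩ := exists_nat_gt (max T 0 / A)
  set N : ℕ := p * K + 1 with hN
  have hNK : (K:ℝ) < N := by
    rw [hN]; push_cast; nlinarith [(Nat.cast_nonneg K : (0:ℝ) ≤ K)]
  have hNn : ‖(N : ℚ_[p])‖ = 1 := by
    rw [Padic.norm_natCast_eq_one_iff, hN]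
    simp
  have hN0 : (0:ℝ) < N := by rw [hN]; positivity
  set w : Fin (n+1) → ℤ := fun j => N * z j with hw
  have hR : (N:ℝ) ≤ supNormR (fun j => (w j : ℚ)) := by
    refine le_trans ?_ (le_supNormR _ i.succ)
    rw [hw]; push_cast; rw [abs_mul, abs_of_pos hN0]
    have : (1:ℝ) ≤ |(z i.succ : ℝ)| := by exact_mod_cast Int.one_le_abs hi
    exact le_mul_of_one_le_right hN0.le this
  have hP : A ≤ supNormP p (fun j : Fin n => (w j.succ : ℚ)) := by
    refine le_trans ?_ (le_supNormP _ i)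
    rw [hw]; push_cast; rw [norm_mul, hNn, one_mul]
  have hTQ : max T 0 < supNormP p (fun j : Fin n => (w j.succ : ℚ)) * supNormR (fun j => (w j : ℚ)) := by
    calc max T 0 < K * A := by rwa [div_lt_iff₀ hA0] at hK
      _ ≤ N * A := by gcongr
      _ = A * N := mul_comm _ _
      _ ≤ _ := mul_le_mul hP hR hN0.le (hA0.le.trans hP)
  refine ⟨(w 0 : ℤ), fun j => (w j.succ : ℤ), isZInvP_int _, fun j => isZInvP_int _, ?_, ?_⟩
  · rw [tail_cons]; exact lt_of_le_of_lt (le_max_left _ _) hTQ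
  · rw [tail_cons]
    have h1 : (∑ j : Fin n, (((w j.succ : ℤ) : ℚ) : ℚ_[p]) * y j) + (((w 0 : ℤ) : ℚ) : ℚ_[p]) = 0 := by
      have h2 := ell_Yc y w
      have h3 : ell (Yc y) w = N * ell (Yc y) z := by
        unfold ell; rw [Finset.mul_sum]
        refine Finset.sum_congr rfl fun j _ => ?_
        rw [hw]; push_cast; ring
      rw [h3, h0, mul_zero] at h2
      rw [h2]; push_cast; rfl
    rw [h1, norm_zero]
    have h2 : 0 < supNormP p (fun j : Fin n => (w j.succ : ℚ)) * supNormR (fun j => (w j : ℚ)) :=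
      lt_of_le_of_lt (le_max_right _ _) hTQ
    have h3 : 0 < supNormR (fun j => (w j : ℚ)) := hN0.trans_le hR
    positivity

lemma exists_delta {n : ℕ} (y : Fin n → ℚ_[p]) (hnz : ∀ z : Fin (n+1) → ℤ, z ≠ 0 → ell (Yc y) z ≠ 0)
    (B : ℝ) : ∃ δ : ℝ, 0 < δ ∧ ∀ z : Fin (n+1) → ℤ, z ≠ 0 → (∀ i, |(z i : ℝ)| ≤ B) → δ ≤ ‖ell (Yc y) z‖ := by
  have hfin : (Set.Icc (fun _ => -⌈B⌉) (fun _ => ⌈B⌉) : Set (Fin (n+1) → ℤ)).Finite := Set.finite_Icc _ _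
  have h1 : ∀ᶠ δ in nhdsWithin (0:ℝ) (Set.Ioi 0), ∀ z ∈ (Set.Icc (fun _ => -⌈B⌉) (fun _ => ⌈B⌉) : Set (Fin (n+1) → ℤ)),
      z ≠ 0 → δ ≤ ‖ell (Yc y) z‖ := by
    rw [Filter.eventually_all_finite hfin]
    intro z _
    by_cases hz : z = 0
    · exact Filter.Eventually.of_forall fun _ h => absurd hz h
    · have : 0 < ‖ell (Yc y) z‖ := norm_pos_iff.2 (hnz z hz)
      filter_upwards [nhdsWithin_le_nhds (Iio_mem_nhds this)] with δ hδ _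
      exact le_of_lt hδ
  obtain ⟨δ, h, hδ⟩ := (h1.and self_mem_nhdsWithin).exists
  refine ⟨δ, hδ, fun z hz hB => h z ⟨fun i => ?_, fun i => ?_⟩ hz⟩
  · have := (abs_le.1 (hB i)).1
    have h3 := Int.le_ceil B
    have : ((-⌈B⌉ : ℤ) : ℝ) ≤ z i := by push_cast; linarith
    exact_mod_cast this
  · have := (abs_le.1 (hB i)).2
    have h3 := Int.le_ceil B
    have : (z i : ℝ) ≤ (⌈B⌉ : ℤ) := by linarith
    exact_mod_cast this

lemma pow_le_abs_of_norm {x : ℤ} (hx : x ≠ 0) (k : ℕ) (h : ‖(x:ℚ_[p])‖ ≤ (p:ℝ)^(-(k:ℤ))) : (p:ℝ)^k ≤ |(x:ℝ)| := by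
  rw [Padic.norm_int_le_pow_iff_dvd] at h
  have := Int.le_of_dvd (abs_pos.2 hx) ((dvd_abs _ _).2 h)
  exact_mod_cast this

lemma wp_of_apx {n : ℕ} (y : Fin n → ℚ_[p]) (v u : ℝ) (hv : 0 < v) (huv : v < u) (h : Apx y u) :
    WpCond p y v := by
  by_cases hex : ∃ z : Fin (n+1) → ℤ, z ≠ 0 ∧ ell (Yc y) z = 0
  · obtain ⟨z, hz, h0⟩ := hex
    exact wp_case1 y v z hz h0
  push Not at hex
  intro T
  have hp := p_pos_real p
  have hp1 := one_lt_p_real p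
  obtain ⟨c, hc⟩ := exists_c y
  have hpc1 : (1:ℝ) ≤ (p:ℝ)^c := one_le_pow₀ hp1.le
  set T1 := max T 1 with hT1
  obtain ⟨δ, hδ, hδz⟩ := exists_delta y hex ((p:ℝ)^c * T1)
  have hr : 1 < (p:ℝ)^(u/(u+1)) := Real.one_lt_rpow hp1 (by have : 0 < u + 1 := by linarith
                                                            have : 0 < u := by linarith
                                                            positivity)
  obtain ⟨t0, ht0⟩ := pow_unbounded_of_one_lt δ⁻¹ hr
  obtain ⟨t, htt, z, hz, hzell, hzR⟩ := h t0
  have hptpos : (0:ℝ) < (p:ℝ)^t := by positivity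
  have hell : ‖ell (Yc y) z‖ ≤ (p:ℝ)^(-(t:ℤ)) := by
    rw [zpow_neg, zpow_natCast, ← one_div, le_div_iff₀ hptpos, mul_comm]; exact hzell
  have hexp : (p:ℝ)^((t:ℝ)/(u+1)) ≤ (p:ℝ)^t := by
    rw [← Real.rpow_natCast]
    apply Real.rpow_le_rpow_of_exponent_le hp1.le
    exact div_le_self (by positivity) (by linarith)
  set qt : Fin (n+1) → ℚ := fun i => (z i : ℚ) with hqt
  set q : Fin n → ℚ := fun i => (z i.succ : ℚ) with hq
  set N := supNormR qt with hN
  obtain ⟨i0, hi0⟩ := exists_supNormR qt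
  have hqtc : ∀ i, ((qt i : ℚ) : ℝ) = z i := fun i => by rw [hqt]; push_cast; rfl
  rw [← hN, hqtc] at hi0
  have hNle : ∀ i, |(z i : ℝ)| ≤ N := fun i => by rw [← hqtc]; exact le_supNormR qt i
  have hNlt : N < (p:ℝ)^((t:ℝ)/(u+1)) := by rw [hi0]; exact hzR i0
  have htail : ∃ i : Fin n, z i.succ ≠ 0 := by
    by_contra hcon
    push Not at hcon
    have h1 := ell_Yc y z
    simp only [hcon, Int.cast_zero, zero_mul, Finset.sum_const_zero, zero_add] at h1
    have hz0 : z 0 ≠ 0 := by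
      intro h0; apply hz; funext j
      refine Fin.cases ?_ (fun j => ?_) j
      · simpa using h0
      · simpa using hcon j
    rw [h1] at hell
    have := pow_le_abs_of_norm hz0 t hell
    linarith [hzR 0]
  obtain ⟨j, hj⟩ := htail
  set A := supNormP p q with hA
  have hqc : ∀ i, ((q i : ℚ) : ℚ_[p]) = z i.succ := fun i => by rw [hq]; push_cast; rfl
  have hAle : ∀ i : Fin n, ‖(z i.succ : ℚ_[p])‖ ≤ A := fun i => by rw [← hqc]; exact le_supNormP q i
  have hA0 : 0 < A := (norm_pos_iff.2 (by exact_mod_cast hj : (z j.succ : ℚ_[p]) ≠ 0)).trans_le (hAle j)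
  obtain ⟨i1, hi1⟩ := exists_supNormP (p := p) q hA0.ne'
  rw [← hA, hqc] at hi1
  have hz1' : (z i1.succ : ℚ_[p]) ≠ 0 := by intro h0; rw [h0, norm_zero] at hi1; exact hA0.ne' hi1
  have hz1 : z i1.succ ≠ 0 := by intro h0; apply hz1'; rw [h0]; simp
  have hA1 : A ≤ 1 := by rw [hi1]; exact Padic.norm_int_le_one _
  obtain ⟨k, hk⟩ : ∃ k : ℕ, A = (p:ℝ)^(-(k:ℤ)) := by
    rw [hi1] at hA1 ⊢
    rw [Padic.norm_eq_zpow_neg_valuation hz1'] at hA1 ⊢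
    have h3 : 0 ≤ (z i1.succ : ℚ_[p]).valuation := by
      by_contra hneg
      push Not at hneg
      have := one_lt_zpow₀ hp1 (n := -(z i1.succ : ℚ_[p]).valuation) (by linarith)
      linarith
    obtain ⟨k, hk⟩ := Int.eq_ofNat_of_zero_le h3
    exact ⟨k, by rw [hk]⟩
  have hkN : (p:ℝ)^k ≤ N := (pow_le_abs_of_norm hz1 k (by rw [← hi1, hk])).trans (hNle _)
  have hN1 : 1 ≤ N := (one_le_pow₀ hp1.le).trans hkN
  have hkt : k ≤ t := by
    have : (p:ℝ)^k ≤ (p:ℝ)^t := by linarith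
    exact (pow_le_pow_iff_right₀ hp1).1 this
  have hAt : (p:ℝ)^(-(t:ℤ)) ≤ A := by
    rw [hk]; exact zpow_le_zpow_right₀ hp1.le (by omega)
  have hl1 : ‖∑ i, (z (Fin.succ i) : ℚ_[p]) * y i‖ ≤ A * (p:ℝ)^c := by
    have := norm_lin_le y q c hc A hA0.le (fun i => le_supNormP q i)
    simpa only [hqc] using this
  have hz0n : ‖(z 0 : ℚ_[p])‖ ≤ A * (p:ℝ)^c := by
    have h1 : (z 0 : ℚ_[p]) = ell (Yc y) z + -(∑ i, (z (Fin.succ i) : ℚ_[p]) * y i) := by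
      rw [ell_Yc]; ring
    rw [h1]
    refine (Padic.nonarchimedean _ _).trans (max_le ?_ (by rwa [norm_neg]))
    exact (hell.trans hAt).trans (le_mul_of_one_le_right hA0.le hpc1)
  have hzn : ∀ i, ‖(z i : ℚ_[p])‖ ≤ A * (p:ℝ)^c := by
    intro i
    refine Fin.cases hz0n (fun i => ?_) i
    exact (hAle i).trans (le_mul_of_one_le_right hA0.le hpc1)
  have hnp : ‖(((p:ℚ)^((c:ℤ) - k) : ℚ) : ℚ_[p])‖ = (A * (p:ℝ)^c)⁻¹ := by
    push_cast
    rw [Padic.norm_p_zpow, hk, ← zpow_natCast, ← zpow_add₀ hp.ne', ← zpow_neg]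
    congr 1; ring
  choose w hw using fun i => zinvp_int (isZInvP_int (p := p) (z i)) ((c:ℤ) - k) (by
    rw [Rat.cast_mul, norm_mul, hnp, inv_mul_le_iff₀ (by positivity), mul_one, Rat.cast_intCast]
    exact hzn i)
  have hellw : ell (Yc y) w = (((p:ℚ)^((c:ℤ) - k) : ℚ) : ℚ_[p]) * ell (Yc y) z := by
    unfold ell; rw [Finset.mul_sum]
    refine Finset.sum_congr rfl fun i _ => ?_
    have h2 : ((w i : ℤ) : ℚ_[p]) = (((w i : ℤ) : ℚ) : ℚ_[p]) := by push_cast; rfl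
    rw [h2, ← hw i, Rat.cast_mul, Rat.cast_intCast, mul_assoc]
  have hw0 : w ≠ 0 := by
    intro h0
    have h1 := hw i1.succ
    rw [h0] at h1
    simp only [Pi.zero_apply, Int.cast_zero, mul_eq_zero] at h1
    rcases h1 with h1 | h1
    · exact zpow_ne_zero _ (by exact_mod_cast (Fact.out : p.Prime).ne_zero) h1
    · exact hz1 (by exact_mod_cast h1)
  have hwabs : ∀ i, |(w i : ℝ)| ≤ (p:ℝ)^c * (A * N) := by
    intro i
    have h1 : ((w i : ℤ) : ℝ) = (p:ℝ)^((c:ℤ) - k) * (z i : ℝ) := by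
      have := congrArg (fun x : ℚ => (x : ℝ)) (hw i)
      push_cast at this
      exact this.symm
    have h2 : (p:ℝ)^((c:ℤ) - k) = (p:ℝ)^c * A := by
      rw [hk, ← zpow_natCast, ← zpow_add₀ hp.ne', sub_eq_add_neg]
    rw [h1, abs_mul, abs_of_pos (by positivity), h2, mul_assoc]
    have := hNle i
    gcongr
  have hwell : ‖ell (Yc y) w‖ < δ := by
    rw [hellw, norm_mul, hnp]
    have hrt : (p:ℝ)^((t:ℝ)/(u+1)) * ((p:ℝ)^(u/(u+1)))^t = (p:ℝ)^t := by
      rw [← Real.rpow_natCast, ← Real.rpow_mul hp.le, ← Real.rpow_add hp, ← Real.rpow_natCast]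
      congr 1
      have : u + 1 ≠ 0 := by linarith
      field_simp
      ring
    have hrt2 : δ⁻¹ < ((p:ℝ)^(u/(u+1)))^t := ht0.trans_le (pow_le_pow_right₀ hr.le htt)
    have hA' : (A * (p:ℝ)^c)⁻¹ ≤ N := by
      have h1 : A⁻¹ = (p:ℝ)^k := by rw [hk, zpow_neg, inv_inv, zpow_natCast]
      have h2 : ((p:ℝ)^c)⁻¹ ≤ 1 := inv_le_one_of_one_le₀ hpc1
      rw [mul_inv, h1]
      calc (p:ℝ)^k * ((p:ℝ)^c)⁻¹ ≤ (p:ℝ)^k * 1 := by gcongr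
        _ ≤ N := by linarith
    calc (A * (p:ℝ)^c)⁻¹ * ‖ell (Yc y) z‖ ≤ N * (p:ℝ)^(-(t:ℤ)) := by gcongr
      _ ≤ (p:ℝ)^((t:ℝ)/(u+1)) * (p:ℝ)^(-(t:ℤ)) := by gcongr
      _ = (((p:ℝ)^(u/(u+1)))^t)⁻¹ := by
        rw [zpow_neg, zpow_natCast, ← hrt, mul_inv]
        have : (p:ℝ)^((t:ℝ)/(u+1)) ≠ 0 := by positivity
        field_simp
      _ < δ := inv_lt_of_inv_lt₀ hδ hrt2
  have hQT : T1 < A * N := by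
    by_contra hcon
    push Not at hcon
    have := hδz w hw0 (fun i => (hwabs i).trans (by gcongr))
    linarith
  have hcons : (Fin.cons ((z 0 : ℤ) : ℚ) q : Fin (n+1) → ℚ) = qt := tail_cons z
  refine ⟨(z 0 : ℤ), q, isZInvP_int _, fun j => isZInvP_int _, ?_, ?_⟩
  · rw [hcons]; exact lt_of_le_of_lt (le_max_left _ _) hQT
  · rw [hcons, ← hA, ← hN]
    have h1 : (∑ i, (q i : ℚ_[p]) * y i) + (((z 0 : ℤ) : ℚ) : ℚ_[p]) = ell (Yc y) z := by
      rw [ell_Yc, Rat.cast_intCast]; simp only [hqc]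
    rw [h1]
    have hQ1 : 1 < A * N := lt_of_le_of_lt (le_max_right _ _) hQT
    have hN0 : 0 < N := by linarith
    have hQN : A * N ≤ N := mul_le_of_le_one_left hN0.le hA1
    have h2 : N^(u+1) < (p:ℝ)^t := by
      have h3 : (p:ℝ)^t = ((p:ℝ)^((t:ℝ)/(u+1)))^(u+1) := by
        rw [← Real.rpow_mul hp.le, div_mul_cancel₀ _ (by linarith), Real.rpow_natCast]
      rw [h3]
      exact Real.rpow_lt_rpow hN0.le hNlt (by linarith)
    calc ‖ell (Yc y) z‖ ≤ ((p:ℝ)^t)⁻¹ := by rw [← zpow_natCast, ← zpow_neg]; exact hell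
      _ < (N^(u+1))⁻¹ := by gcongr
      _ = N^(-(u+1)) := by rw [Real.rpow_neg hN0.le]
      _ ≤ N^(-(v+1)) := Real.rpow_le_rpow_of_exponent_le hN1 (by linarith)
      _ = N^(-v) * N⁻¹ := by rw [neg_add, Real.rpow_add hN0, Real.rpow_neg_one]
      _ ≤ (A*N)^(-v) * N⁻¹ := by
        have := Real.rpow_le_rpow_of_nonpos (by linarith : 0 < A*N) hQN (by linarith : -v ≤ 0)
        gcongr

lemma not_apx_of_wpExp {n : ℕ} (y : Fin n → ℚ_[p]) (v : ℝ) (hv : 0 < v) (h : wpExp p y ≤ ENNReal.ofReal v)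
    (u : ℝ) (hu : v < u) : ¬ Apx y u := by
  intro ha
  have h1 := wp_of_apx y ((u+v)/2) u (by linarith) (by linarith) ha
  have h2 : ENNReal.ofReal ((u+v)/2) ≤ wpExp p y :=
    le_iSup₂_of_le (f := fun (v : ℝ) (_ : 0 < v ∧ WpCond p y v) => ENNReal.ofReal v) ((u+v)/2) ⟨by linarith, h1⟩ le_rfl
  have h3 := (ENNReal.ofReal_le_ofReal_iff hv.le).1 (h2.trans h)
  linarith

lemma wpExp_of_not_apx {n : ℕ} (y : Fin n → ℚ_[p]) (v : ℝ) (hv : 0 < v)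
    (h : ∀ u : ℚ, v < u → ¬ Apx y u) : wpExp p y ≤ ENNReal.ofReal v := by
  refine iSup₂_le fun w hw => ?_
  by_contra hcon
  push Not at hcon
  have hvw : v < w := by
    by_contra hc; push Not at hc
    exact absurd (ENNReal.ofReal_le_ofReal hc) (not_le.2 hcon)
  obtain ⟨u, hu1, hu2⟩ := exists_rat_btwn hvw
  exact h u hu1 (apx_of_wp y w u (by linarith) hu2 hw.2)

lemma wpExp_iff {n : ℕ} (y : Fin n → ℚ_[p]) (v : ℝ) (hv : 0 < v) :
    wpExp p y ≤ ENNReal.ofReal v ↔ ∀ u : ℚ, v < u → ¬ Apx y u :=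
  ⟨fun h u hu => not_apx_of_wpExp y v hv h u hu, wpExp_of_not_apx y v hv⟩

end Dio2
section Curve
open Filter Topology
variable {p : ℕ} [Fact p.Prime]

lemma ev_one (s : ℤ_[p]) : ev (fun k => if k = 0 then (1:ℚ_[p]) else 0) s = 1 := by
  unfold ev
  rw [tsum_eq_single 0]
  · simp
  · intro k hk; simp [hk]

theorem curve_ae (ν : Measure ℤ_[p]) [ν.IsAddHaarMeasure] {n : ℕ} (f : Fin n → ℕ → ℚ_[p])
    (hf : ∀ i, Tendsto (f i) atTop (𝓝 0)) (v : ℝ) (hv : 0 < v)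
    (h : wpExp p (fun i => ev (f i) 0) ≤ ENNReal.ofReal v) :
    ∀ᵐ s ∂ν, wpExp p (fun i => ev (f i) s) ≤ ENNReal.ofReal v := by
  have hp := p_pos_real p
  have hp1 := one_lt_p_real p
  simp_rw [wpExp_iff _ v hv]
  rw [ae_all_iff]
  intro u'
  by_cases hu' : v < u'
  swap
  · exact Eventually.of_forall fun _ hc => absurd hc hu'
  set u : ℝ := (v + u')/2 with hu
  have hna := not_apx_of_wpExp _ v hv h u (by rw [hu]; linarith)
  have huu' : u < u' := by rw [hu]; linarith
  have hu0 : 0 < u := by rw [hu]; linarith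
  unfold Apx at hna
  push Not at hna
  obtain ⟨t0, ht0⟩ := hna
  set F : Fin (n+1) → ℕ → ℚ_[p] := Fin.cons (fun k => if k = 0 then (1:ℚ_[p]) else 0) f with hFdef
  have hF : ∀ i, Tendsto (F i) atTop (𝓝 0) := by
    intro i
    refine Fin.cases ?_ (fun i => ?_) i
    · rw [hFdef]
      simp only [Fin.cons_zero]
      refine tendsto_const_nhds.congr' ?_
      filter_upwards [eventually_ge_atTop 1] with k hk
      rw [if_neg (by omega)]
    · rw [hFdef]; simpa using hf i
  have hFev : ∀ s, (fun i => ev (F i) s) = Yc (fun i => ev (f i) s) := by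
    intro s
    funext i
    refine Fin.cases ?_ (fun i => ?_) i
    · rw [hFdef]; simp only [Fin.cons_zero, Yc]; exact ev_one s
    · rw [hFdef]; simp [Yc]
  obtain ⟨K, a, hK, ha, hnd⟩ := nondiv_curve ν (Nat.succ_pos n) F hF
  simp only [hFev] at hnd
  set β : ℝ := 1/(u+1) - 1/((u':ℝ)+1) with hβdef
  have hβ : 0 < β := by
    rw [hβdef, sub_pos]; apply one_div_lt_one_div_of_lt <;> linarith
  set r : ℝ := (p:ℝ)^(-β) with hr
  have hr0 : 0 < r := by rw [hr]; positivity
  have hr1 : r < 1 := Real.rpow_lt_one_of_one_lt_of_neg hp1 (by linarith)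
  set C : ℝ := (((n+1 : ℕ) : ℝ))^2 with hC
  have hC0 : 0 < C := by rw [hC]; positivity
  have hCt : Tendsto (fun t : ℕ => C * r^t) atTop (𝓝 0) := by
    simpa using (tendsto_pow_atTop_nhds_zero_of_lt_one hr0.le hr1).const_mul C
  obtain ⟨t1, ht1⟩ := eventually_atTop.1 (hCt.eventually_le_const (show (0:ℝ) < 1 by norm_num))
  set T := max t0 t1 with hT
  set E : ℕ → Set ℤ_[p] := fun t => {s | ∃ z : Fin (n+1) → ℤ, z ≠ 0 ∧
    (p:ℝ)^t * ‖ell (Yc (fun i => ev (f i) s)) z‖ ≤ 1 ∧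
    ∀ i, |(z i : ℝ)| < (p:ℝ)^((t:ℝ)/((u':ℝ)+1))} with hE
  have hbound : ∀ t, T ≤ t → ν (E t) ≤ K * ENNReal.ofReal ((C * r^t)^a) := by
    intro t ht
    have hR : 0 < (p:ℝ)^((t:ℝ)/(u+1)) := by positivity
    refine le_trans (measure_mono ?_) (hnd t ((p:ℝ)^((t:ℝ)/(u+1))) (C * r^t) hR (by positivity)
      (ht1 t ((le_max_right _ _).trans ht)) (fun z hz hz1 => ht0 t ((le_max_left _ _).trans ht) z hz hz1))
    rintro s ⟨z, hz, hz1, hz2⟩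
    refine ⟨z, hz, hz1, fun i => ?_⟩
    have : C * r^t * (p:ℝ)^((t:ℝ)/(u+1)) = C * (p:ℝ)^((t:ℝ)/((u':ℝ)+1)) := by
      rw [mul_assoc, hr, ← Real.rpow_natCast, ← Real.rpow_mul hp.le, ← Real.rpow_add hp]
      congr 2
      rw [hβdef]; ring
    rw [this]
    exact mul_lt_mul_of_pos_left (hz2 i) hC0
  have hra : r^a < 1 := Real.rpow_lt_one hr0.le hr1 ha
  have hra0 : 0 < r^a := by positivity
  have hsum : ∑' t, ν (E (t + T)) ≠ ∞ := by
    refine ne_top_of_le_ne_top ?_ (ENNReal.tsum_le_tsum fun t => hbound (t+T) (by omega))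
    rw [ENNReal.tsum_mul_left]
    refine ENNReal.mul_ne_top hK ?_
    have hs : Summable (fun t : ℕ => (C * r^(t+T))^a) := by
      have h1 : (fun t : ℕ => (C * r^(t+T))^a) = fun t => (C^a * (r^a)^T) * (r^a)^t := by
        funext t
        rw [Real.mul_rpow hC0.le (by positivity), ← Real.rpow_natCast r, ← Real.rpow_mul hr0.le,
          mul_comm ((t+T : ℕ) : ℝ), Real.rpow_mul hr0.le, Real.rpow_natCast, pow_add]
        ring
      rw [h1]
      exact (summable_geometric_of_lt_one hra0.le hra).mul_left _
    exact hs.tsum_ofReal_ne_top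
  filter_upwards [ae_eventually_notMem hsum] with s hs _ hap
  obtain ⟨N, hN⟩ := eventually_atTop.1 hs
  obtain ⟨t, ht, z, hz, hz1, hz2⟩ := hap (N + T)
  have := hN (t - T) (by omega)
  rw [Nat.sub_add_cancel (by omega)] at this
  exact this ⟨z, hz, hz1, hz2⟩

end Curve
section Main
open Filter Topology
variable {p : ℕ} [Fact p.Prime]

lemma continuous_ellYc {n : ℕ} (z : Fin (n+1) → ℤ) :
    Continuous (fun y : Fin n → ℚ_[p] => ell (Yc y) z) := by
  simp_rw [ell_Yc]
  fun_prop

lemma measurableSet_apx {n : ℕ} (u : ℝ) : MeasurableSet {y : Fin n → ℚ_[p] | Apx y u} := by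
  have : {y : Fin n → ℚ_[p] | Apx y u} = ⋂ t0 : ℕ, ⋃ t : ℕ, ⋃ z : Fin (n+1) → ℤ,
      {y | t0 ≤ t ∧ z ≠ 0 ∧ (p:ℝ)^t * ‖ell (Yc y) z‖ ≤ 1 ∧ ∀ i, |(z i : ℝ)| < (p:ℝ)^((t:ℝ)/(u+1))} := by
    ext y
    simp only [Set.mem_iInter, Set.mem_iUnion]
    constructor
    · intro h t0
      obtain ⟨t, h1, z, h2, h3, h4⟩ := h t0
      exact ⟨t, z, h1, h2, h3, h4⟩
    · intro h t0
      obtain ⟨t, z, h1, h2, h3, h4⟩ := h t0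
      exact ⟨t, h1, z, h2, h3, h4⟩
  rw [this]
  refine MeasurableSet.iInter fun t0 => MeasurableSet.iUnion fun t => MeasurableSet.iUnion fun z => ?_
  by_cases hc : t0 ≤ t ∧ z ≠ 0 ∧ ∀ i, |(z i : ℝ)| < (p:ℝ)^((t:ℝ)/(u+1))
  · have h1 : {y : Fin n → ℚ_[p] | t0 ≤ t ∧ z ≠ 0 ∧ (p:ℝ)^t * ‖ell (Yc y) z‖ ≤ 1 ∧ ∀ i, |(z i : ℝ)| < (p:ℝ)^((t:ℝ)/(u+1))}
        = {y | (p:ℝ)^t * ‖ell (Yc y) z‖ ≤ 1} := by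
      ext y
      exact ⟨fun h => h.2.2.1, fun h => ⟨hc.1, hc.2.1, h, hc.2.2⟩⟩
    rw [h1]
    exact (isClosed_le (continuous_const.mul (continuous_ellYc z).norm) continuous_const).measurableSet
  · have h1 : {y : Fin n → ℚ_[p] | t0 ≤ t ∧ z ≠ 0 ∧ (p:ℝ)^t * ‖ell (Yc y) z‖ ≤ 1 ∧ ∀ i, |(z i : ℝ)| < (p:ℝ)^((t:ℝ)/(u+1))}
        = ∅ := by
      ext y
      exact ⟨fun h => hc ⟨h.1, h.2.1, h.2.2.2⟩, fun h => h.elim⟩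
    rw [h1]; exact MeasurableSet.empty

lemma measurableSet_good {n : ℕ} (v : ℝ) (hv : 0 < v) :
    MeasurableSet {y : Fin n → ℚ_[p] | wpExp p y ≤ ENNReal.ofReal v} := by
  have : {y : Fin n → ℚ_[p] | wpExp p y ≤ ENNReal.ofReal v} =
      ⋂ u : ℚ, ⋂ _ : v < u, {y : Fin n → ℚ_[p] | Apx y u}ᶜ := by
    ext y
    simp only [Set.mem_iInter]
    exact wpExp_iff y v hv
  rw [this]
  exact MeasurableSet.iInter fun u => MeasurableSet.iInter fun _ => (measurableSet_apx _).compl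

lemma curve_of_series {d n : ℕ} (ν : Measure ℤ_[p]) [ν.IsAddHaarMeasure]
    (f : (Fin d → ℚ_[p]) → (Fin n → ℚ_[p])) (x0 : Fin d → ℚ_[p]) (ε : ℝ)
    (P : FormalMultilinearSeries ℚ_[p] (Fin d → ℚ_[p]) (Fin n → ℚ_[p]))
    (hP : ∀ x, ‖x‖ < ε → HasSum (fun k => P k (fun _ => x)) (f (x0 + x)))
    (v : ℝ) (hv : 0 < v) (hw : wpExp p (f x0) ≤ ENNReal.ofReal v)
    (x : Fin d → ℚ_[p]) (hx : ‖x‖ < ε) :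
    ∀ᵐ (s : ℤ_[p]) ∂ν, wpExp p (f (x0 + (s : ℚ_[p]) • x)) ≤ ENNReal.ofReal v := by
  set g : Fin n → ℕ → ℚ_[p] := fun i k => P k (fun _ => x) i with hg
  have hev : ∀ s : ℤ_[p], (fun i => ev (g i) s) = f (x0 + (s : ℚ_[p]) • x) := by
    intro s
    have hsx : ‖(s : ℚ_[p]) • x‖ < ε := by
      rw [norm_smul]
      have : ‖(s : ℚ_[p])‖ ≤ 1 := s.2
      exact lt_of_le_of_lt (mul_le_of_le_one_left (norm_nonneg _) this) hx
    have h1 := hP _ hsx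
    funext i
    have h2 := (Pi.hasSum.1 h1) i
    unfold ev
    rw [← h2.tsum_eq]
    congr 1
    funext k
    have h3 : P k (fun _ => (s : ℚ_[p]) • x) = (s : ℚ_[p])^k • P k (fun _ => x) := by
      have := (P k).map_smul_univ (fun _ => (s : ℚ_[p])) (fun _ => x)
      simpa using this
    rw [h3, hg]; simp [mul_comm]
  have h0 : (fun i => ev (g i) 0) = f x0 := by rw [hev 0]; simp
  have := curve_ae ν g (fun i => ((Pi.hasSum.1 (hP x hx)) i).summable.tendsto_atTop_zero) v hv (by rw [h0]; exact hw)
  filter_upwards [this] with s hs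
  rw [← hev s]; exact hs

lemma chart_restrict {d n : ℕ} {M : Set (Fin n → ℚ_[p])} {U U' : Set (Fin d → ℚ_[p])}
    {f : (Fin d → ℚ_[p]) → (Fin n → ℚ_[p])} (h : IsChart p d n M U f) (hU' : IsOpen U') (hsub : U' ⊆ U) :
    IsChart p d n M U' f := by
  obtain ⟨_, h2, h3, h4, h5, W0, hW0, hMW0⟩ := h
  refine ⟨hU', h2.mono hsub, h3.mono hsub, fun x hx => h4 x (hsub hx), ?_, ?_⟩
  · intro x hx V hV hxV
    obtain ⟨W, hW, hxW, hWs⟩ := h5 x (hsub hx) (V ∩ U') (hV.inter hU') ⟨hxV, hx⟩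
    refine ⟨W, hW, hxW, ?_⟩
    rintro y ⟨hy, hy'⟩
    obtain ⟨x', hx', rfl⟩ := hWs ⟨hy, Set.image_mono hsub hy'⟩
    exact ⟨x', hx'.1, rfl⟩
  · choose! W hW hxW hWs using fun x (hx : x ∈ U') => h5 x (hsub hx) U' hU' hx
    refine ⟨W0 ∩ ⋃ x ∈ U', W x, hW0.inter (isOpen_biUnion fun x hx => hW x hx), ?_⟩
    ext y
    constructor
    · rintro ⟨hyM, hyW0, hy⟩
      rw [Set.mem_iUnion₂] at hy
      obtain ⟨x, hx, hyx⟩ := hy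
      have : y ∈ f '' U := by rw [← hMW0]; exact ⟨hyM, hyW0⟩
      obtain ⟨x', hx', rfl⟩ := hWs x hx ⟨hyx, this⟩
      exact ⟨x', hx'.1, rfl⟩
    · rintro ⟨x, hx, rfl⟩
      have : f x ∈ M ∩ W0 := by rw [hMW0]; exact ⟨x, hsub hx, rfl⟩
      exact ⟨this.1, this.2, Set.mem_iUnion₂.2 ⟨x, hx, hxW x hx⟩⟩

end Main
section Main2
open Filter Topology
variable {p : ℕ} [Fact p.Prime]

lemma exists_scale {d n : ℕ}
    (f : (Fin d → ℚ_[p]) → (Fin n → ℚ_[p])) (x0 : Fin d → ℚ_[p]) (ε : ℝ)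
    (hfc : ContinuousOn f (ball x0 ε))
    (P : FormalMultilinearSeries ℚ_[p] (Fin d → ℚ_[p]) (Fin n → ℚ_[p]))
    (hP : ∀ x, ‖x‖ < ε → HasSum (fun k => P k (fun _ => x)) (f (x0 + x)))
    (v : ℝ) (hv : 0 < v) (hw : wpExp p (f x0) ≤ ENNReal.ofReal v)
    (l : Measure (Fin d → ℚ_[p])) [SFinite l] :
    ∃ s : ℤ_[p], s ≠ 0 ∧ ∀ᵐ x ∂l, ‖x‖ < ε → wpExp p (f (x0 + (s : ℚ_[p]) • x)) ≤ ENNReal.ofReal v := by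
  classical
  set ν : Measure ℤ_[p] := Measure.addHaarMeasure ⊤ with hν
  set f' : (Fin d → ℚ_[p]) → (Fin n → ℚ_[p]) := (ball x0 ε).piecewise f (fun _ => 0) with hf'
  have hf'm : Measurable f' :=
    ContinuousOn.measurable_piecewise hfc continuousOn_const isOpen_ball.measurableSet
  have hsx : ∀ (x : Fin d → ℚ_[p]) (s : ℤ_[p]), ‖x‖ < ε → x0 + (s : ℚ_[p]) • x ∈ ball x0 ε := by
    intro x s hx
    rw [mem_ball_iff_norm, add_sub_cancel_left, norm_smul]
    have : ‖(s : ℚ_[p])‖ ≤ 1 := s.2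
    exact lt_of_le_of_lt (mul_le_of_le_one_left (norm_nonneg _) this) hx
  have hmeas : MeasurableSet {q : (Fin d → ℚ_[p]) × ℤ_[p] | ‖q.1‖ < ε → wpExp p (f' (x0 + (q.2 : ℚ_[p]) • q.1)) ≤ ENNReal.ofReal v} := by
    have h1 : Measurable (fun q : (Fin d → ℚ_[p]) × ℤ_[p] => f' (x0 + (q.2 : ℚ_[p]) • q.1)) := by
      refine hf'm.comp ?_
      have : Continuous (fun q : (Fin d → ℚ_[p]) × ℤ_[p] => x0 + (q.2 : ℚ_[p]) • q.1) :=
        continuous_const.add ((continuous_subtype_val.comp continuous_snd).smul continuous_fst)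
      exact this.measurable
    have h2 : MeasurableSet {q : (Fin d → ℚ_[p]) × ℤ_[p] | ‖q.1‖ < ε} :=
      (isOpen_lt continuous_fst.norm continuous_const).measurableSet
    exact h2.imp (h1 (measurableSet_good v hv))
  have h1 : ∀ᵐ x ∂l, ∀ᵐ (s : ℤ_[p]) ∂ν, ‖x‖ < ε → wpExp p (f' (x0 + (s : ℚ_[p]) • x)) ≤ ENNReal.ofReal v := by
    refine Eventually.of_forall fun x => ?_
    by_cases hx : ‖x‖ < ε
    · filter_upwards [curve_of_series ν f x0 ε P hP v hv hw x hx] with s hs _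
      rw [hf', Set.piecewise_eq_of_mem _ _ _ (hsx x s hx)]
      exact hs
    · exact Eventually.of_forall fun s h => absurd h hx
  have h2 := (Measure.ae_ae_comm hmeas).1 h1
  have hne : ν ({0}ᶜ : Set ℤ_[p]) ≠ 0 :=
    (isOpen_compl_singleton.measure_pos ν ⟨1, one_ne_zero⟩).ne'
  obtain ⟨s, hs0, hs⟩ := Measure.exists_mem_of_measure_ne_zero_of_ae hne (ae_restrict_of_ae h2)
  refine ⟨s, hs0, ?_⟩
  filter_upwards [hs] with x hx hxe
  have := hx hxe
  rwa [hf', Set.piecewise_eq_of_mem _ _ _ (hsx x s hxe)] at this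

lemma transfer {d : ℕ} (Q : (Fin d → ℚ_[p]) → Prop) (h : ∀ᵐ x ∂(Measure.addHaar : Measure (Fin d → ℚ_[p])), Q x)
    (a : ℚ_[p]) (ha : a ≠ 0) (x0 : Fin d → ℚ_[p]) (μ : Measure (Fin d → ℚ_[p])) [μ.IsAddHaarMeasure] :
    ∀ᵐ x ∂μ, Q (a • (x - x0)) := by
  have : (μ.map (ContinuousLinearEquiv.smulLeft (Units.mk0 a ha) : (Fin d → ℚ_[p]) ≃L[ℚ_[p]] _)).IsAddHaarMeasure :=
    ContinuousLinearEquiv.isAddHaarMeasure_map _ μ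
  have h1 := Measure.isAddLeftInvariant_eq_smul (μ.map (ContinuousLinearEquiv.smulLeft (Units.mk0 a ha) : (Fin d → ℚ_[p]) ≃L[ℚ_[p]] _)) Measure.addHaar
  have h2 : ∀ᵐ x ∂(μ.map (ContinuousLinearEquiv.smulLeft (Units.mk0 a ha) : (Fin d → ℚ_[p]) ≃L[ℚ_[p]] _)), Q x := by
    rw [h1]; exact Measure.ae_smul_measure h _
  have h3 := ae_of_ae_map (ContinuousLinearEquiv.continuous _).measurable.aemeasurable h2
  exact (measurePreserving_sub_right μ x0).quasiMeasurePreserving.ae h3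

theorem main (p : ℕ) [Fact p.Prime] (n d : ℕ) (hn : 1 ≤ n)
    (M : Set (Fin n → ℚ_[p])) (hM : IsAnalyticSubmanifold p d n M)
    (v : ℝ) (hv : (n : ℝ) ≤ v)
    (y₀ : Fin n → ℚ_[p]) (hy₀ : y₀ ∈ M)
    (hw : wpExp p y₀ ≤ ENNReal.ofReal v) :
    ∃ (U : Set (Fin d → ℚ_[p])) (f : (Fin d → ℚ_[p]) → (Fin n → ℚ_[p])),
      IsChart p d n M U f ∧ y₀ ∈ f '' U ∧
      ∀ (μ : Measure (Fin d → ℚ_[p])), μ.IsAddHaarMeasure →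
        ∀ᵐ x ∂μ, x ∈ U → wpExp p (f x) ≤ ENNReal.ofReal v := by
  have hv0 : 0 < v := by
    have : (1:ℝ) ≤ n := by exact_mod_cast hn
    linarith
  obtain ⟨U, f, hch, x0, hx0, rfl⟩ := hM.2 y₀ hy₀
  obtain ⟨P, r, hPr⟩ := hch.2.1 x0 hx0
  obtain ⟨ε1, hε1, hb1⟩ := Metric.isOpen_iff.1 hch.1 x0 hx0
  obtain ⟨ε2, hε2, hb2⟩ : ∃ ε2 : ℝ, 0 < ε2 ∧ ENNReal.ofReal ε2 ≤ r := by
    rcases eq_or_ne r ∞ with h | h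
    · exact ⟨1, one_pos, h ▸ le_top⟩
    · exact ⟨r.toReal, ENNReal.toReal_pos hPr.r_pos.ne' h, (ENNReal.ofReal_toReal h).le⟩
  set ε := min ε1 ε2 with hε
  have hε0 : 0 < ε := lt_min hε1 hε2
  have hbU : ball x0 ε ⊆ U := (ball_subset_ball (min_le_left _ _)).trans hb1
  have hP : ∀ x, ‖x‖ < ε → HasSum (fun k => P k (fun _ => x)) (f (x0 + x)) := by
    intro x hx
    apply hPr.hasSum
    rw [mem_eball_zero_iff]
    refine lt_of_lt_of_le ?_ hb2
    rw [← ofReal_norm]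
    exact (ENNReal.ofReal_lt_ofReal_iff hε2).2 (hx.trans_le (min_le_right _ _))
  obtain ⟨s, hs0, hs⟩ := exists_scale f x0 ε (hch.2.1.continuousOn.mono hbU) P hP v hv0 hw Measure.addHaar
  have hs0' : (s : ℚ_[p]) ≠ 0 := by simpa using hs0
  have hsn : 0 < ‖(s : ℚ_[p])‖ := norm_pos_iff.2 hs0'
  have hs1 : ‖(s : ℚ_[p])‖ ≤ 1 := s.2
  refine ⟨ball x0 (‖(s : ℚ_[p])‖ * ε), f, chart_restrict hch isOpen_ball
    ((ball_subset_ball (mul_le_of_le_one_left hε0.le hs1)).trans hbU),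
    ⟨x0, mem_ball_self (by positivity), rfl⟩, ?_⟩
  intro μ hμ
  filter_upwards [transfer _ hs (s : ℚ_[p])⁻¹ (inv_ne_zero hs0') x0 μ] with x hx hxU
  have h1 := hx (by
    rw [norm_smul, norm_inv, inv_mul_lt_iff₀ hsn]
    exact mem_ball_iff_norm.1 hxU)
  rwa [smul_inv_smul₀ hs0', add_sub_cancel] at h1

end Main2



/-- If `M ⊆ ℚ_p^n` is an analytic submanifold, `v ≥ n` and
`w_p(y₀) ≤ v` for some `y₀ ∈ M`, then for almost every `y` in a neighbourhood of `y₀`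
in `M` (w.r.t. the smooth measure class on `M`) one has `w_p(y) ≤ v`. -/
theorem statement2 (p : ℕ) [Fact p.Prime] (n d : ℕ) (hn : 1 ≤ n)
    (M : Set (Fin n → ℚ_[p])) (hM : IsAnalyticSubmanifold p d n M)
    (v : ℝ) (hv : (n : ℝ) ≤ v)
    (y₀ : Fin n → ℚ_[p]) (hy₀ : y₀ ∈ M)
    (hw : wpExp p y₀ ≤ ENNReal.ofReal v) :
    ∃ (U : Set (Fin d → ℚ_[p])) (f : (Fin d → ℚ_[p]) → (Fin n → ℚ_[p])),
      IsChart p d n M U f ∧ y₀ ∈ f '' U ∧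
      ∀ (μ : Measure (Fin d → ℚ_[p])), μ.IsAddHaarMeasure →
        ∀ᵐ x ∂μ, x ∈ U → wpExp p (f x) ≤ ENNReal.ofReal v := by
  exact main p n d hn M hM v hv y₀ hy₀ hw

end PadicDioph
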